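/- Let $(M,\langle\,,\,\rangle)$ be a connected, complete Riemannian manifold of dimension $m\ge 2$, fix $o\in M$, write $r(x)=\mathrm{dist}(o,x)$ and $B_R=\{x\in M: r(x)<R\}$, and integrate with respect to the Riemannian volume. Let $\Omega\subseteq M$ be an open set. Let $A$ be a Carathéodory-type generalized bundle map over $\Omega$: it assigns to $x\in\Omega$, $s\in\mathbb R$, $\xi\in T_xM$ a vector $A(x,s,\xi)\in T_xM$, it is continuous in $(s,\xi)$ for a.e. $x\in\Omega$, and in every chart it is measurable in $x$ for fixed $s$ and fixed coordinates of $\xi$. Assume that $A$ is weakly-1-coercive with constant $k>0$, that is, for all $x\in\Omega$, $s\in\mathbb R$, $\xi\in T_xM$, $$\langle A(x,s,\xi),\xi\rangle\ge 0,\qquad A(x,s,0)=0,\qquad |A(x,s,\xi)|\le k,$$ and strictly monotone, that is, $\langle A(x,t,\xi)-A(x,s,\eta),\xi-\eta\rangle\ge 0$ for all $x\in\Omega$, $\xi,\eta\in T_xM$ and $t\ge s$, with strict inequality if $t>s$ and $\xi\ne\eta$. Let $w\in L^\infty_{\mathrm{loc}}(\Omega)$ with $w>0$ a.e. in $\Omega$,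 and let $L$ be the operator $Lu=w^{-1}\,\mathrm{div}(w\,A(x,u,\nabla u))$, understood weakly: $Lu\ge h$ in $\Omega$ means $$-\int_\Omega w\,\langle A(x,u,\nabla u),\nabla\varphi\rangle\ \ge\ \int_\Omega w\,h\,\varphi\qquad\text{for all } 0\le\varphi\in W^{1,1}_c(\Omega),$$ and $Lu\le h$ means the reversed inequality. Here $W^{1,1}_{\mathrm{loc}}(\Omega)$ is the space of measurable functions on $\Omega$ whose restriction to every open set $\Omega_0$ that is relatively compact in $\Omega$ lies in the completion of $C^1(\Omega_0)$ with respect to the norm $\int_{\Omega_0}(|u|+|\nabla u|)$, and $W^{1,1}_c(\Omega)$ consists of its elements that vanish outside a compact subset of $\Omega$. Let $\mu\in[0,1]$ and $\beta>0$, and let $b\in C(M)$ be positive and satisfy $$\liminf_{r(x)\to+\infty} r(x)^\mu b(x)\ge\beta\ \text{ if } 0<\mu\le 1,\qquad b\ge\beta \text{ on } M\ \text{ if } \mu=0 .$$ Let $f\in C^1(\mathbb R)$ satisfy $f(s)-f(t)\ge\alpha(s-t)$ for all $s>t$, for some $\alpha>0$. Set $$c^w_\mu(\Omega)=\liminf_{R\to+\infty}\frac{(1-\mu)\log\int_{B_R\cap\Omega}w}{R^{1-\mu}}\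 \text{ if } 0\le\mu<1,\qquad c^w_1(\Omega)=\liminf_{R\to+\infty}\frac{\log\int_{B_R\cap\Omega}w}{\log R},$$ with $\log(+\infty)=+\infty$. If $u,v\in W^{1,1}_{\mathrm{loc}}(\Omega)\cap C(\overline\Omega)$ satisfy $Lu\ge b(x)f(u)$ and $Lv\le b(x)f(v)$ weakly in $\Omega$, then $$u\ \le\ v+\max\Big\{\frac{2k}{\alpha\beta}\,c^w_\mu(\Omega),\ \sup_{\partial\Omega}(u-v)\Big\}\qquad\text{in }\Omega,$$ where $\sup_\emptyset=-\infty$ if $\partial\Omega=\emptyset$. -/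

import Mathlib

open MeasureTheory Filter Set Bundle Manifold
open scoped ContDiff Topology

noncomputable section

namespace WeakOneCoercive

/-- The model space `ℝ^m` with its Euclidean norm. -/
abbrev Euc (m : ℕ) := EuclideanSpace ℝ (Fin m)

/-- The tangent space `T_x M` of an `m`-dimensional manifold `M`. -/
abbrev Tan {m : ℕ} {M : Type*} [TopologicalSpace M] [ChartedSpace (Euc m) M] (x : M) :=
  TangentSpace 𝓘(ℝ, Euc m) x

section Geometry

variable {m : ℕ} {M : Type*} [MetricSpace M] [ChartedSpace (Euc m) M]
  [RiemannianBundle (fun x : M => TangentSpace 𝓘(ℝ, Euc m) x)]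

/-- The differential of the chart `e` at `x`, which sends a tangent vector to its coordinates. -/
def chartD (e : OpenPartialHomeomorph M (Euc m)) (x : M) (ξ : Tan (m := m) x) : Euc m :=
  mfderiv 𝓘(ℝ, Euc m) 𝓘(ℝ, Euc m) e x ξ

/-- The differential of the inverse of the chart `e` at the point `y` of its target: it sends
`a ∈ ℝ^m` to the tangent vector `∑ aᵢ ∂/∂yᵢ`. -/
def chartSymmD (e : OpenPartialHomeomorph M (Euc m)) (y : Euc m) (a : Euc m) :
    Tan (m := m) (e.symm y) :=
  mfderiv 𝓘(ℝ, Euc m) 𝓘(ℝ, Euc m) e.symm y a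

/-- The tangent vector at `x` (a point of the source of `e`) with coordinates `a` in the chart
`e`, that is, the value at `a` of the inverse of `chartD e x`. -/
def ofCoord (e : OpenPartialHomeomorph M (Euc m)) (x : M) (a : Euc m) : Tan (m := m) x :=
  (mfderiv 𝓘(ℝ, Euc m) 𝓘(ℝ, Euc m) e x).inverse a

/-- The matrix `g_{ij} = ⟨∂/∂yᵢ, ∂/∂yⱼ⟩` of the metric in the chart `e`. -/
def metricMatrix (e : OpenPartialHomeomorph M (Euc m)) (y : Euc m) : Matrix (Fin m) (Fin m) ℝ :=
  Matrix.of fun i j => inner ℝ (chartSymmD e y (EuclideanSpace.single i 1))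
    (chartSymmD e y (EuclideanSpace.single j 1))

/-- The Riemannian measure `√(det g_{ij}) dy` on the domain of the chart `e`, as a measure on `M`
that vanishes outside the domain of `e`. -/
def chartVolume [MeasurableSpace M] (e : OpenPartialHomeomorph M (Euc m)) : Measure M :=
  (((volume : Measure (Euc m)).restrict e.target).withDensity
    fun y => ENNReal.ofReal (Real.sqrt (metricMatrix e y).det)).map e.symm

/-- A smooth partition of unity subordinate to the charts of `M`. -/
def chartPartition (m : ℕ) (M : Type*) [MetricSpace M] [ChartedSpace (Euc m) M]
    [IsManifold 𝓘(ℝ, Euc m) ∞ M] [SigmaCompactSpace M] :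
    SmoothPartitionOfUnity M 𝓘(ℝ, Euc m) M univ :=
  Classical.choose
    (SmoothPartitionOfUnity.exists_isSubordinate_chartAt_source 𝓘(ℝ, Euc m) M)

/-- The Riemannian volume measure of `M`: in every chart it is `√(det g_{ij}) dy`. The local
expressions are patched together with a partition of unity, on which the result does not depend
because they agree where two charts overlap. -/
def riemVolume (m : ℕ) (M : Type*) [MetricSpace M] [ChartedSpace (Euc m) M]
    [IsManifold 𝓘(ℝ, Euc m) ∞ M] [RiemannianBundle (fun x : M => TangentSpace 𝓘(ℝ, Euc m) x)]
    [SigmaCompactSpace M] [MeasurableSpace M] : Measure M :=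
  Measure.sum fun p : M => (chartVolume (m := m) (chartAt (Euc m) p)).withDensity
    fun x => ENNReal.ofReal (chartPartition m M p x)

/-- The Riemannian gradient `∇u(x)`: the vector with `⟨∇u(x), ξ⟩ = du_x(ξ)` for all `ξ ∈ T_x M`. -/
def riemGradient (u : M → ℝ) (x : M) : Tan (m := m) x :=
  haveI : FiniteDimensional ℝ (TangentSpace 𝓘(ℝ, Euc m) x) :=
    inferInstanceAs (FiniteDimensional ℝ (Euc m))
  haveI : CompleteSpace (TangentSpace 𝓘(ℝ, Euc m) x) :=
    FiniteDimensional.complete ℝ (TangentSpace 𝓘(ℝ, Euc m) x)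
  (InnerProductSpace.toDual ℝ (TangentSpace 𝓘(ℝ, Euc m) x)).symm
    (mfderiv 𝓘(ℝ, Euc m) 𝓘(ℝ, ℝ) u x)

end Geometry

section Analysis

variable {m : ℕ} {M : Type*} [MetricSpace M] [ChartedSpace (Euc m) M]
  [IsManifold 𝓘(ℝ, Euc m) ∞ M] [RiemannianBundle (fun x : M => TangentSpace 𝓘(ℝ, Euc m) x)]
  [SigmaCompactSpace M] [MeasurableSpace M]

/-- The vector field `X` is (Lebesgue) measurable on `Ω`: so are its coordinates in every chart. -/
def MeasurableField (Ω : Set M) (X : ∀ x : M, Tan (m := m) x) : Prop :=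
  ∀ e ∈ atlas (Euc m) M,
    AEMeasurable (fun x => chartD e x (X x)) ((riemVolume m M).restrict (e.source ∩ Ω))

/-- `u ∈ W^{1,1}_loc(Ω)` with weak gradient `G`: on every open set `Ω₀` that is relatively compact
in `Ω`, the pair `(u, G)` is the limit in `L¹(Ω₀)` of pairs `(uₙ, ∇uₙ)` with `uₙ ∈ C¹(Ω₀)` of
finite `W^{1,1}(Ω₀)`-norm. In other words, `u` is in the completion of `C¹(Ω₀)` for this norm,
and `G` is the gradient of `u` in this completion. -/
structure HasWeakGradient (Ω : Set M) (u : M → ℝ) (G : ∀ x : M, Tan (m := m) x) : Prop where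
  measurable : AEMeasurable u ((riemVolume m M).restrict Ω)
  measurable_grad : MeasurableField Ω G
  approx : ∀ Ω₀ : Set M, IsOpen Ω₀ → IsCompact (closure Ω₀) → closure Ω₀ ⊆ Ω →
    ∃ U : ℕ → M → ℝ,
      (∀ n, ContMDiffOn 𝓘(ℝ, Euc m) 𝓘(ℝ, ℝ) 1 (U n) Ω₀ ∧
        ∫⁻ x in Ω₀, (‖U n x‖ₑ + ‖riemGradient (m := m) (U n) x‖ₑ) ∂(riemVolume m M) < ⊤) ∧
      Tendsto (fun n => ∫⁻ x in Ω₀,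
        (‖U n x - u x‖ₑ + ‖riemGradient (m := m) (U n) x - G x‖ₑ) ∂(riemVolume m M))
        atTop (𝓝 0)

/-- `φ ∈ W^{1,1}_c(Ω)` with `φ ≥ 0` and weak gradient `Φ`. -/
structure IsTestFunction (Ω : Set M) (φ : M → ℝ) (Φ : ∀ x : M, Tan (m := m) x) : Prop where
  weakGradient : HasWeakGradient Ω φ Φ
  compactSupport : ∃ K : Set M, IsCompact K ∧ K ⊆ Ω ∧ ∀ x, x ∉ K → φ x = 0
  nonneg : ∀ x, 0 ≤ φ x

/-- A Carathéodory-type generalized bundle map `A(x, s, ξ)` over `Ω`: continuous in `(s, ξ)` for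
almost every `x ∈ Ω`, and in every chart measurable in `x` for fixed `s` and fixed coordinates `a`
of `ξ`. -/
structure IsCaratheodory (Ω : Set M)
    (A : ∀ x : M, ℝ → Tan (m := m) x → Tan (m := m) x) : Prop where
  continuous : ∀ᵐ x ∂((riemVolume m M).restrict Ω),
    Continuous fun p : ℝ × Tan (m := m) x => A x p.1 p.2
  measurable : ∀ e ∈ atlas (Euc m) M, ∀ (s : ℝ) (a : Euc m),
    AEMeasurable (fun x => chartD e x (A x s (ofCoord e x a)))
      ((riemVolume m M).restrict (e.source ∩ Ω))

/-- `A` is weakly-1-coercive over `Ω` with coercivity constant `k`. -/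
structure IsWeaklyOneCoercive (Ω : Set M)
    (A : ∀ x : M, ℝ → Tan (m := m) x → Tan (m := m) x) (k : ℝ) : Prop where
  inner_nonneg : ∀ x ∈ Ω, ∀ (s : ℝ) (ξ : Tan (m := m) x), 0 ≤ inner ℝ (A x s ξ) ξ
  map_zero : ∀ x ∈ Ω, ∀ s : ℝ, A x s 0 = 0
  norm_le : ∀ x ∈ Ω, ∀ (s : ℝ) (ξ : Tan (m := m) x), ‖A x s ξ‖ ≤ k

/-- `A` is strictly monotone over `Ω`. -/
structure IsStrictlyMonotone (Ω : Set M)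
    (A : ∀ x : M, ℝ → Tan (m := m) x → Tan (m := m) x) : Prop where
  monotone : ∀ x ∈ Ω, ∀ (s t : ℝ) (ξ η : Tan (m := m) x), s ≤ t →
    0 ≤ inner ℝ (A x t ξ - A x s η) (ξ - η)
  strict : ∀ x ∈ Ω, ∀ (s t : ℝ) (ξ η : Tan (m := m) x), s < t → ξ ≠ η →
    0 < inner ℝ (A x t ξ - A x s η) (ξ - η)

variable (m) in
/-- `w ∈ L^∞_loc(Ω)` and `w > 0` almost everywhere in `Ω`. -/
structure IsWeight (Ω : Set M) (w : M → ℝ) : Prop where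
  measurable : AEMeasurable w ((riemVolume m M).restrict Ω)
  locallyBounded : ∀ K : Set M, IsCompact K → K ⊆ Ω →
    ∃ C : ℝ, ∀ᵐ x ∂((riemVolume m M).restrict K), |w x| ≤ C
  pos : ∀ᵐ x ∂((riemVolume m M).restrict Ω), 0 < w x

/-- `Lu ≥ h` weakly in `Ω`, where `Lu = w⁻¹ div(w A(x, u, ∇u))` and `G = ∇u`. -/
def WeakGE (Ω : Set M) (w : M → ℝ) (A : ∀ x : M, ℝ → Tan (m := m) x → Tan (m := m) x)
    (u : M → ℝ) (G : ∀ x : M, Tan (m := m) x) (h : M → ℝ) : Prop :=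
  ∀ (φ : M → ℝ) (Φ : ∀ x : M, Tan (m := m) x), IsTestFunction Ω φ Φ →
    ∫ x in Ω, w x * h x * φ x ∂(riemVolume m M) ≤
      -∫ x in Ω, w x * inner ℝ (A x (u x) (G x)) (Φ x) ∂(riemVolume m M)

/-- `Lu ≤ h` weakly in `Ω`, where `Lu = w⁻¹ div(w A(x, u, ∇u))` and `G = ∇u`. -/
def WeakLE (Ω : Set M) (w : M → ℝ) (A : ∀ x : M, ℝ → Tan (m := m) x → Tan (m := m) x)
    (u : M → ℝ) (G : ∀ x : M, Tan (m := m) x) (h : M → ℝ) : Prop :=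
  ∀ (φ : M → ℝ) (Φ : ∀ x : M, Tan (m := m) x), IsTestFunction Ω φ Φ →
    -∫ x in Ω, w x * inner ℝ (A x (u x) (G x)) (Φ x) ∂(riemVolume m M) ≤
      ∫ x in Ω, w x * h x * φ x ∂(riemVolume m M)

variable (m) in
/-- The weighted growth parameter `c^w_μ(Ω) ∈ [-∞, +∞]`:
`liminf_{R → ∞} (1-μ) log(∫_{B_R ∩ Ω} w) / R^{1-μ}` if `μ ≠ 1`, and
`liminf_{R → ∞} log(∫_{B_R ∩ Ω} w) / log R` if `μ = 1`, where `B_R = B_R(o)`.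
The integral of `w` may be `+∞`, with `log(+∞) = +∞`. -/
def weightedGrowth (o : M) (μ : ℝ) (w : M → ℝ) (Ω : Set M) : EReal :=
  if μ = 1 then
    liminf (fun R : ℝ =>
      ENNReal.log (∫⁻ x in Metric.ball o R ∩ Ω, ENNReal.ofReal (w x) ∂(riemVolume m M)) /
        ((Real.log R : ℝ) : EReal)) atTop
  else
    liminf (fun R : ℝ =>
      ((1 - μ : ℝ) : EReal) *
        ENNReal.log (∫⁻ x in Metric.ball o R ∩ Ω, ENNReal.ofReal (w x) ∂(riemVolume m M)) /
        ((R ^ (1 - μ) : ℝ) : EReal)) atTop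

end Analysis

/-- Condition (B): `b ≥ β` on `M` if `μ = 0`, and `liminf_{r(x) → ∞} r(x)^μ b(x) ≥ β` otherwise,
where `r(x) = dist(o, x)`. -/
def ConditionB {M : Type*} [MetricSpace M] (o : M) (μ β : ℝ) (b : M → ℝ) : Prop :=
  if μ = 0 then ∀ x, β ≤ b x
  else (β : EReal) ≤
    liminf (fun x : M => ((dist o x ^ μ * b x : ℝ) : EReal)) (comap (fun x => dist o x) atTop)

end WeakOneCoercive

end

/-!
Suppose that `u - v` takes a value `> γ` in `Ω`, where `γ > 0` exceeds `u - v` on `∂Ω`. Testing the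
two weak inequalities with `ψ Λ(u - v - γ)`, where `Λ` is a smooth step function, and using the
monotonicity of `A` and of `f - α id` together with `|A| ≤ k`, one gets the energy inequality
`∫_Ω w Λ(u - v - γ) (α γ b ψ - 2 k |∇ψ|) ≤ 0` for every `C¹` function `ψ ≥ 0` of compact support.

Take `ψ = e^{-θ g(τ)}`, cut off where `τ` is close to `R`; here `g' = t ^ (-μ)` and `τ` is a smooth
function at bounded distance from `r` with `|∇τ|` at most slightly larger than `1`. If
`2 k θ < α γ β`, condition (B) makes the integrand nonnegative, except for a term bounded below by
`-C w e^{-θ g(R)}` that comes from the cut-off. Hence `∫_{B_R ∩ Ω} w ≥ c e^{θ g(R)}` with `c > 0`,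
that is, `θ ≤ c^w_μ(Ω)`, and `θ → α γ β / (2 k)` gives `γ ≤ (2 k / (α β)) c^w_μ(Ω)`.
-/

namespace WeakOneCoercive

section ChartCoordinates

variable {m : ℕ} {M : Type*} [MetricSpace M] [ChartedSpace (Euc m) M]

/-- `chartD e x` as a continuous linear map. -/
noncomputable def chartDL (e : OpenPartialHomeomorph M (Euc m)) (x : M) :
    Tan (m := m) x →L[ℝ] Euc m :=
  mfderiv 𝓘(ℝ, Euc m) 𝓘(ℝ, Euc m) e x

lemma chartD_eq_chartDL (e : OpenPartialHomeomorph M (Euc m)) (x : M) (ξ : Tan (m := m) x) :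
    chartD e x ξ = chartDL e x ξ := rfl

variable [IsManifold 𝓘(ℝ, Euc m) ∞ M] {e : OpenPartialHomeomorph M (Euc m)}

/-- The differential of a chart at a point `x` of its domain, as an isomorphism of `T_x M` with
`ℝ^m`; its inverse is `ofCoord e x`. -/
noncomputable def chartDEquiv (he : e ∈ atlas (Euc m) M) {x : M} (hx : x ∈ e.source) :
    Tan (m := m) x ≃L[ℝ] Euc m :=
  (mdifferentiable_of_mem_atlas he).mfderiv hx

lemma ofCoord_eq_chartDEquiv_symm (he : e ∈ atlas (Euc m) M) {x : M} (hx : x ∈ e.source)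
    (a : Euc m) : ofCoord e x a = (chartDEquiv he hx).symm a := by
  change ContinuousLinearMap.inverse (chartDEquiv he hx : Tan (m := m) x →L[ℝ] Euc m) a = _
  rw [ContinuousLinearMap.inverse_equiv]
  rfl

lemma chartD_ofCoord (he : e ∈ atlas (Euc m) M) {x : M} (hx : x ∈ e.source) (a : Euc m) :
    chartD e x (ofCoord e x a) = a := by
  rw [ofCoord_eq_chartDEquiv_symm he hx]
  exact (chartDEquiv he hx).apply_symm_apply a

lemma ofCoord_chartD (he : e ∈ atlas (Euc m) M) {x : M} (hx : x ∈ e.source)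
    (ξ : Tan (m := m) x) : ofCoord e x (chartD e x ξ) = ξ := by
  rw [ofCoord_eq_chartDEquiv_symm he hx]
  exact (chartDEquiv he hx).symm_apply_apply ξ

lemma ofCoord_eq_chartSymmD (he : e ∈ atlas (Euc m) M) {x : M} (hx : x ∈ e.source) (a : Euc m) :
    ofCoord e x a = (chartSymmD e (e x) a : Euc m) := by
  have h : chartSymmD e (e x) (chartD e x (ofCoord e x a)) = (ofCoord e x a : Euc m) :=
    congrArg (fun L => L (ofCoord e x a))
      ((mdifferentiable_of_mem_atlas (I := 𝓘(ℝ, Euc m)) he).symm_comp_deriv hx)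
  rw [← h, chartD_ofCoord he hx]

lemma chartSymmD_eq_ofCoord (he : e ∈ atlas (Euc m) M) {y : Euc m} (hy : y ∈ e.target)
    (a : Euc m) : chartSymmD e y a = ofCoord e (e.symm y) a := by
  rw [ofCoord_eq_chartSymmD he (e.map_target hy), e.right_inv hy]

lemma continuousOn_ofCoord (he : e ∈ atlas (Euc m) M) (a : Euc m) :
    ContinuousOn (fun x => (⟨x, ofCoord e x a⟩ : TangentBundle 𝓘(ℝ, Euc m) M)) e.source := by
  have hsymm : ContMDiffOn 𝓘(ℝ, Euc m) 𝓘(ℝ, Euc m) 1 e.symm e.target :=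
    contMDiffOn_symm_of_mem_maximalAtlas (IsManifold.subset_maximalAtlas he)
  have hconst : ContinuousOn (fun x : M => (⟨e x, a⟩ : TangentBundle 𝓘(ℝ, Euc m) (Euc m)))
      e.source :=
    ((tangentBundleModelSpaceHomeomorph 𝓘(ℝ, Euc m)).symm.continuous.comp
      (continuous_id.prodMk continuous_const)).comp_continuousOn e.continuousOn
  refine ((hsymm.continuousOn_tangentMapWithin le_rfl e.open_target.uniqueMDiffOn).comp hconst
    fun x hx => e.map_source hx).congr fun x hx => ?_
  have htangent : tangentMapWithin 𝓘(ℝ, Euc m) 𝓘(ℝ, Euc m) e.symm e.target ⟨e x, a⟩ =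
      ⟨e.symm (e x), chartSymmD e (e x) a⟩ := by
    rw [tangentMapWithin, mfderivWithin_of_isOpen e.open_target (e.map_source hx)]
    rfl
  refine Eq.trans ?_ htangent.symm
  rw [chartSymmD_eq_ofCoord he (e.map_source hx), e.left_inv hx]

/-- The vector field `∂/∂yᵢ` of the chart `e`. -/
noncomputable def coordFrame (e : OpenPartialHomeomorph M (Euc m)) (i : Fin m) (x : M) :
    Tan (m := m) x :=
  ofCoord e x (EuclideanSpace.single i 1)

lemma eq_sum_coordFrame (he : e ∈ atlas (Euc m) M) {x : M} (hx : x ∈ e.source)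
    (ξ : Tan (m := m) x) : ξ = ∑ i, chartD e x ξ i • coordFrame e i x := by
  have hsum := (EuclideanSpace.basisFun (Fin m) ℝ).sum_repr (chartD e x ξ)
  simp only [EuclideanSpace.basisFun_repr, EuclideanSpace.basisFun_apply] at hsum
  conv_lhs => rw [← ofCoord_chartD he hx ξ, ← hsum]
  simp only [coordFrame, ofCoord_eq_chartDEquiv_symm he hx, map_sum, map_smul]

lemma linearIndependent_coordFrame (he : e ∈ atlas (Euc m) M) {x : M} (hx : x ∈ e.source) :
    LinearIndependent ℝ (fun i => coordFrame e i x) := by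
  have hframe : (fun i => coordFrame e i x) =
      (chartDEquiv he hx).symm.toLinearEquiv.toLinearMap ∘
        (EuclideanSpace.basisFun (Fin m) ℝ).toBasis :=
    funext fun i => by simp [coordFrame, ofCoord_eq_chartDEquiv_symm he hx]
  rw [hframe]
  exact (EuclideanSpace.basisFun (Fin m) ℝ).toBasis.linearIndependent.map' _ (LinearEquiv.ker _)

end ChartCoordinates

section Gram

variable {m : ℕ} {M : Type*} [MetricSpace M] [ChartedSpace (Euc m) M]
  [RiemannianBundle (fun x : M => TangentSpace 𝓘(ℝ, Euc m) x)]

/-- The matrix of the metric in the chart `e`, as a function on `M`; `metricMatrix e` is the same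
matrix as a function of the coordinates. -/
noncomputable def chartGram (e : OpenPartialHomeomorph M (Euc m)) (x : M) :
    Matrix (Fin m) (Fin m) ℝ :=
  Matrix.gram ℝ fun i => coordFrame e i x

variable [IsManifold 𝓘(ℝ, Euc m) ∞ M] {e : OpenPartialHomeomorph M (Euc m)}

lemma posDef_chartGram (he : e ∈ atlas (Euc m) M) {x : M} (hx : x ∈ e.source) :
    (chartGram e x).PosDef :=
  Matrix.posDef_gram_of_linearIndependent (linearIndependent_coordFrame he hx)

lemma metricMatrix_eq_chartGram (he : e ∈ atlas (Euc m) M) {y : Euc m} (hy : y ∈ e.target) :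
    metricMatrix e y = chartGram e (e.symm y) := by
  ext i j
  simp only [metricMatrix, chartGram, coordFrame, Matrix.gram_apply, Matrix.of_apply,
    chartSymmD_eq_ofCoord he hy]

lemma inner_eq_sum_chartGram (he : e ∈ atlas (Euc m) M) {x : M} (hx : x ∈ e.source)
    (ξ η : Tan (m := m) x) :
    inner ℝ ξ η = ∑ i, ∑ j, chartD e x ξ i * chartD e x η j * chartGram e x i j := by
  conv_lhs => rw [eq_sum_coordFrame he hx ξ, eq_sum_coordFrame he hx η]
  rw [sum_inner]
  simp only [inner_sum, real_inner_smul_left, real_inner_smul_right, chartGram,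
    Matrix.gram_apply, mul_assoc, mul_left_comm]

lemma chartD_apply_eq_sum_inner (he : e ∈ atlas (Euc m) M) {x : M} (hx : x ∈ e.source)
    (ξ : Tan (m := m) x) (i : Fin m) :
    chartD e x ξ i = ∑ j, inner ℝ ξ (coordFrame e j x) * (chartGram e x)⁻¹ j i := by
  have hdet : IsUnit (chartGram e x).det := (posDef_chartGram he hx).det_pos.ne'.isUnit
  have hvecMul : (fun j => inner ℝ ξ (coordFrame e j x)) =
      Matrix.vecMul (chartD e x ξ).ofLp (chartGram e x) := by
    ext j
    conv_lhs => rw [eq_sum_coordFrame he hx ξ, sum_inner]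
    simp only [Matrix.vecMul, dotProduct, real_inner_smul_left, chartGram, Matrix.gram_apply]
  change _ = Matrix.vecMul (fun j => inner ℝ ξ (coordFrame e j x)) (chartGram e x)⁻¹ i
  rw [hvecMul, Matrix.vecMul_vecMul, Matrix.mul_nonsing_inv _ hdet, Matrix.vecMul_one]

variable [IsContMDiffRiemannianBundle 𝓘(ℝ, Euc m) ∞ (Euc m)
  (fun x : M => TangentSpace 𝓘(ℝ, Euc m) x)]

instance isContinuousRiemannianBundle_tangent :
    IsContinuousRiemannianBundle (Euc m) (fun x : M => TangentSpace 𝓘(ℝ, Euc m) x) := by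
  obtain ⟨g, hg, h⟩ := IsContMDiffRiemannianBundle.exists_contMDiff (IB := 𝓘(ℝ, Euc m)) (n := ∞)
    (F := Euc m) (E := fun x : M => TangentSpace 𝓘(ℝ, Euc m) x)
  exact ⟨g, hg.continuous, h⟩

lemma continuousOn_chartGram (he : e ∈ atlas (Euc m) M) :
    ContinuousOn (chartGram e) e.source :=
  continuousOn_pi.2 fun _ => continuousOn_pi.2 fun _ =>
    (continuousOn_ofCoord he _).inner_bundle (F := Euc m)
      (E := fun x : M => TangentSpace 𝓘(ℝ, Euc m) x) (b := id) (continuousOn_ofCoord he _)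

lemma continuousOn_chartGram_apply (he : e ∈ atlas (Euc m) M) (i j : Fin m) :
    ContinuousOn (fun x => chartGram e x i j) e.source :=
  (continuous_id.matrix_elem i j).comp_continuousOn (continuousOn_chartGram he)

lemma continuousOn_chartGram_inv_apply (he : e ∈ atlas (Euc m) M) (i j : Fin m) :
    ContinuousOn (fun x => (chartGram e x)⁻¹ i j) e.source := by
  simp only [Matrix.inv_def, Ring.inverse_eq_inv', Matrix.smul_apply, smul_eq_mul]
  exact ((continuous_id.matrix_det.comp_continuousOn (continuousOn_chartGram he)).inv₀
    fun x hx => (posDef_chartGram he hx).det_pos.ne').mul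
      ((continuous_id.matrix_adjugate.matrix_elem i j).comp_continuousOn
        (continuousOn_chartGram he))

end Gram

section Gradient

variable {m : ℕ} {M : Type*} [MetricSpace M] [ChartedSpace (Euc m) M]

lemma continuousOn_mvfderiv_coordFrame [IsManifold 𝓘(ℝ, Euc m) ∞ M] {Ω : Set M} (hΩ : IsOpen Ω)
    {U : M → ℝ} (hU : ContMDiffOn 𝓘(ℝ, Euc m) 𝓘(ℝ, ℝ) 1 U Ω)
    {e : OpenPartialHomeomorph M (Euc m)} (he : e ∈ atlas (Euc m) M) (i : Fin m) :
    ContinuousOn (fun x => mvfderiv 𝓘(ℝ, Euc m) U x (coordFrame e i x)) (e.source ∩ Ω) := by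
  have htangent := (hU.continuousOn_tangentMapWithin le_rfl hΩ.uniqueMDiffOn).comp
    ((continuousOn_ofCoord he (EuclideanSpace.single i 1)).mono inter_subset_left)
    (fun x (hx : x ∈ e.source ∩ Ω) => hx.2)
  refine (continuous_snd.comp_continuousOn ((tangentBundleModelSpaceHomeomorph
    𝓘(ℝ, ℝ)).continuous.comp_continuousOn htangent)).congr fun x hx => ?_
  change _ = mfderivWithin 𝓘(ℝ, Euc m) 𝓘(ℝ, ℝ) U Ω x (coordFrame e i x)
  rw [mfderivWithin_of_isOpen hΩ hx.2]
  rfl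

variable [RiemannianBundle (fun x : M => TangentSpace 𝓘(ℝ, Euc m) x)]

lemma inner_riemGradient (U : M → ℝ) (x : M) (ξ : Tan (m := m) x) :
    inner ℝ (riemGradient U x) ξ = mvfderiv 𝓘(ℝ, Euc m) U x ξ := by
  have : FiniteDimensional ℝ (TangentSpace 𝓘(ℝ, Euc m) x) :=
    inferInstanceAs (FiniteDimensional ℝ (Euc m))
  have : CompleteSpace (TangentSpace 𝓘(ℝ, Euc m) x) := FiniteDimensional.complete ℝ _
  exact InnerProductSpace.toDual_symm_apply (𝕜 := ℝ)

lemma riemGradient_eq_of_mvfderiv {U : M → ℝ} {x : M} {X : Tan (m := m) x}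
    (h : ∀ ξ, mvfderiv 𝓘(ℝ, Euc m) U x ξ = inner ℝ X ξ) : riemGradient U x = X :=
  ext_inner_right ℝ fun ξ => by rw [inner_riemGradient, h]

end Gradient

end WeakOneCoercive

section CaratheodoryComposition

variable {α Y Z : Type*} [MeasurableSpace α] [MeasurableSpace Z] {ν : Measure α} {F : α → Y → Z}

lemma aemeasurable_comp_simpleFunc (hF : ∀ y, AEMeasurable (fun x => F x y) ν)
    (s : SimpleFunc α Y) : AEMeasurable (fun x => F x (s x)) ν := by
  refine ⟨fun x => (hF (s x)).mk _ x,
    s.measurable_bind (fun y x => (hF y).mk _ x) fun y => (hF y).measurable_mk, ?_⟩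
  have h : ∀ᵐ x ∂ν, ∀ y ∈ s.range, F x y = (hF y).mk _ x :=
    (ae_ball_iff s.range.countable_toSet).2 fun y _ => (hF y).ae_eq_mk
  filter_upwards [h] with x hx using hx _ (s.mem_range_self x)

lemma aemeasurable_caratheodory_comp
    [TopologicalSpace Y] [TopologicalSpace.PseudoMetrizableSpace Y] [SecondCountableTopology Y]
    [MeasurableSpace Y] [BorelSpace Y]
    [TopologicalSpace Z] [TopologicalSpace.PseudoMetrizableSpace Z] [BorelSpace Z]
    (hF : ∀ y, AEMeasurable (fun x => F x y) ν) (hFc : ∀ᵐ x ∂ν, Continuous (F x)) {V : α → Y}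
    (hV : AEMeasurable V ν) : AEMeasurable (fun x => F x (V x)) ν := by
  have hV' : StronglyMeasurable (hV.mk V) := hV.measurable_mk.stronglyMeasurable
  have hmk : AEMeasurable (fun x => F x (hV.mk V x)) ν := by
    refine aemeasurable_of_tendsto_metrizable_ae atTop
      (fun n => aemeasurable_comp_simpleFunc hF (hV'.approx n)) ?_
    filter_upwards [hFc] with x hx
    exact (hx.tendsto _).comp (hV'.tendsto_approx x)
  refine hmk.congr ?_
  filter_upwards [hV.ae_eq_mk] with x hx
  rw [hx]

end CaratheodoryComposition

namespace WeakOneCoercive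

section MeasurableFields

variable {m : ℕ} {M : Type*} [MetricSpace M] [ChartedSpace (Euc m) M]
  [IsManifold 𝓘(ℝ, Euc m) ∞ M] [RiemannianBundle (fun x : M => TangentSpace 𝓘(ℝ, Euc m) x)]
  [SigmaCompactSpace M] [MeasurableSpace M] {Ω : Set M}

section Algebra

variable {X Y : ∀ x : M, Tan (m := m) x}

lemma MeasurableField.mono {Ω' : Set M} (h : Ω' ⊆ Ω) (hX : MeasurableField Ω X) :
    MeasurableField Ω' X := fun e he =>
  (hX e he).mono_measure (Measure.restrict_mono (inter_subset_inter_right _ h) le_rfl)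

lemma MeasurableField.congr (hX : MeasurableField Ω X)
    (h : ∀ᵐ x ∂(riemVolume m M).restrict Ω, X x = Y x) : MeasurableField Ω Y := fun e he => by
  refine (hX e he).congr ?_
  filter_upwards [ae_mono (Measure.restrict_mono inter_subset_right le_rfl) h] with x hx
  rw [hx]

lemma MeasurableField.add (hX : MeasurableField Ω X) (hY : MeasurableField Ω Y) :
    MeasurableField Ω (fun x => X x + Y x) := fun e he => by
  simp only [chartD_eq_chartDL, map_add]
  exact (hX e he).add (hY e he)

lemma MeasurableField.sub (hX : MeasurableField Ω X) (hY : MeasurableField Ω Y) :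
    MeasurableField Ω (fun x => X x - Y x) := fun e he => by
  simp only [chartD_eq_chartDL, map_sub]
  exact (hX e he).sub (hY e he)

lemma MeasurableField.smul {g : M → ℝ} (hg : AEMeasurable g ((riemVolume m M).restrict Ω))
    (hX : MeasurableField Ω X) : MeasurableField Ω (fun x => g x • X x) := fun e he => by
  simp only [chartD_eq_chartDL, map_smul]
  exact (hg.mono_measure (Measure.restrict_mono inter_subset_right le_rfl)).smul (hX e he)

end Algebra

lemma aemeasurable_of_chartwise {Z : Type*} [MeasurableSpace Z] {g : M → Z}
    (h : ∀ e ∈ atlas (Euc m) M, AEMeasurable g ((riemVolume m M).restrict (e.source ∩ Ω))) :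
    AEMeasurable g ((riemVolume m M).restrict Ω) := by
  have : SecondCountableTopology M := ChartedSpace.secondCountable_of_sigmaCompact (Euc m) M
  obtain ⟨s, hs, hsU⟩ := TopologicalSpace.countable_cover_nhds
    (fun x : M => (chartAt (Euc m) x).open_source.mem_nhds (mem_chart_source (Euc m) x))
  have : Countable s := hs
  have hcover : Ω = ⋃ x : s, (chartAt (Euc m) (x : M)).source ∩ Ω := by
    rw [← iUnion_inter, ← biUnion_eq_iUnion s fun x _ => (chartAt (Euc m) x).source, hsU,
      univ_inter]
  rw [hcover, aemeasurable_iUnion_iff]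
  exact fun x => h _ (chart_mem_atlas _ _)

variable [BorelSpace M]

lemma ae_restrict_inter_mem_source (e : OpenPartialHomeomorph M (Euc m)) :
    ∀ᵐ x ∂(riemVolume m M).restrict (e.source ∩ Ω), x ∈ e.source :=
  ae_mono (Measure.restrict_mono inter_subset_left le_rfl)
    (ae_restrict_mem e.open_source.measurableSet)

lemma IsCaratheodory.measurableField_comp
    {A : ∀ x : M, ℝ → Tan (m := m) x → Tan (m := m) x} (hA : IsCaratheodory Ω A)
    {u : M → ℝ} (hu : AEMeasurable u ((riemVolume m M).restrict Ω))
    {X : ∀ x : M, Tan (m := m) x} (hX : MeasurableField Ω X) :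
    MeasurableField Ω (fun x => A x (u x) (X x)) := fun e he => by
  have hsub : (riemVolume m M).restrict (e.source ∩ Ω) ≤ (riemVolume m M).restrict Ω :=
    Measure.restrict_mono inter_subset_right le_rfl
  have hcont : ∀ᵐ x ∂(riemVolume m M).restrict (e.source ∩ Ω),
      Continuous fun p : ℝ × Euc m => chartD e x (A x p.1 (ofCoord e x p.2)) := by
    filter_upwards [ae_mono hsub hA.continuous] with x hx
    exact (chartDL e x).continuous.comp (hx.comp (continuous_fst.prodMk
      ((chartDL e x).inverse.continuous.comp continuous_snd)))
  refine (aemeasurable_caratheodory_comp (fun p => hA.measurable e he p.1 p.2) hcont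
    ((hu.mono_measure hsub).prodMk (hX e he))).congr ?_
  filter_upwards [ae_restrict_inter_mem_source e] with x hx
  rw [ofCoord_chartD he hx]

variable [IsContMDiffRiemannianBundle 𝓘(ℝ, Euc m) ∞ (Euc m)
  (fun x : M => TangentSpace 𝓘(ℝ, Euc m) x)] {X Y : ∀ x : M, Tan (m := m) x}

lemma MeasurableField.inner (hX : MeasurableField Ω X) (hY : MeasurableField Ω Y) :
    AEMeasurable (fun x => inner ℝ (X x) (Y x)) ((riemVolume m M).restrict Ω) := by
  refine aemeasurable_of_chartwise fun e he => ?_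
  have hcoord : ∀ {X : ∀ x : M, Tan (m := m) x}, MeasurableField Ω X → ∀ i,
      AEMeasurable (fun x => chartD e x (X x) i) ((riemVolume m M).restrict (e.source ∩ Ω)) :=
    fun hX i => (PiLp.continuous_apply 2 (fun _ : Fin m => ℝ) i).measurable.comp_aemeasurable
      (hX e he)
  have hgram : ∀ i j, AEMeasurable (fun x => chartGram e x i j)
      ((riemVolume m M).restrict (e.source ∩ Ω)) := fun i j =>
    ((continuousOn_chartGram_apply he i j).aemeasurable e.open_source.measurableSet).mono_measure
      (Measure.restrict_mono inter_subset_left le_rfl)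
  have hsum : AEMeasurable (fun x => ∑ i, ∑ j,
      chartD e x (X x) i * chartD e x (Y x) j * chartGram e x i j)
      ((riemVolume m M).restrict (e.source ∩ Ω)) :=
    Finset.aemeasurable_fun_sum _ fun i _ => Finset.aemeasurable_fun_sum _ fun j _ =>
      ((hcoord hX i).mul (hcoord hY j)).mul (hgram i j)
  refine hsum.congr ?_
  filter_upwards [ae_restrict_inter_mem_source e] with x hx
  rw [inner_eq_sum_chartGram he hx]

lemma MeasurableField.norm (hX : MeasurableField Ω X) :
    AEMeasurable (fun x => ‖X x‖) ((riemVolume m M).restrict Ω) := by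
  simpa only [← norm_eq_sqrt_real_inner] using (hX.inner hX).sqrt

lemma MeasurableField.enorm (hX : MeasurableField Ω X) :
    AEMeasurable (fun x => ‖X x‖ₑ) ((riemVolume m M).restrict Ω) := by
  simpa only [ofReal_norm] using hX.norm.ennreal_ofReal

lemma measurableField_of_inner_coordFrame
    (h : ∀ e ∈ atlas (Euc m) M, ∀ i, AEMeasurable (fun x => inner ℝ (X x) (coordFrame e i x))
      ((riemVolume m M).restrict (e.source ∩ Ω))) : MeasurableField Ω X := fun e he => by
  have hinv : ∀ i j, AEMeasurable (fun x => (chartGram e x)⁻¹ i j)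
      ((riemVolume m M).restrict (e.source ∩ Ω)) := fun i j =>
    ((continuousOn_chartGram_inv_apply he i j).aemeasurable
      e.open_source.measurableSet).mono_measure (Measure.restrict_mono inter_subset_left le_rfl)
  have hsum : AEMeasurable (fun x => WithLp.toLp 2 fun i =>
      ∑ j, inner ℝ (X x) (coordFrame e j x) * (chartGram e x)⁻¹ j i)
      ((riemVolume m M).restrict (e.source ∩ Ω)) :=
    (PiLp.continuous_toLp 2 (fun _ : Fin m => ℝ)).measurable.comp_aemeasurable <|
      aemeasurable_pi_lambda _ fun i => Finset.aemeasurable_fun_sum _ fun j _ =>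
        (h e he j).mul (hinv j i)
  refine hsum.congr ?_
  filter_upwards [ae_restrict_inter_mem_source e] with x hx
  ext i
  exact (chartD_apply_eq_sum_inner he hx (X x) i).symm

lemma measurableField_riemGradient (hΩ : IsOpen Ω) {U : M → ℝ}
    (hU : ContMDiffOn 𝓘(ℝ, Euc m) 𝓘(ℝ, ℝ) 1 U Ω) :
    MeasurableField Ω (riemGradient (m := m) U) := by
  refine measurableField_of_inner_coordFrame fun e he i => ?_
  simp only [inner_riemGradient]
  exact (continuousOn_mvfderiv_coordFrame hΩ hU he i).aemeasurable
    (e.open_source.inter hΩ).measurableSet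

end MeasurableFields

section VolumePositivity

variable {m : ℕ} {M : Type*} [MetricSpace M] [ChartedSpace (Euc m) M]
  [IsManifold 𝓘(ℝ, Euc m) ∞ M] [RiemannianBundle (fun x : M => TangentSpace 𝓘(ℝ, Euc m) x)]
  [IsContMDiffRiemannianBundle 𝓘(ℝ, Euc m) ∞ (Euc m)
    (fun x : M => TangentSpace 𝓘(ℝ, Euc m) x)]
  [MeasurableSpace M] [BorelSpace M]

lemma chartVolume_pos {e : OpenPartialHomeomorph M (Euc m)} (he : e ∈ atlas (Euc m) M)
    {V : Set M} (hV : IsOpen V) (hVe : (V ∩ e.source).Nonempty) : 0 < chartVolume e V := by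
  have hdet : ContinuousOn (fun y => (metricMatrix e y).det) e.target :=
    (continuous_id.matrix_det.comp_continuousOn ((continuousOn_chartGram he).comp
      e.continuousOn_symm e.mapsTo_symm)).congr fun y hy => by
        rw [metricMatrix_eq_chartGram he hy]
        rfl
  have hdensity : AEMeasurable (fun y => ENNReal.ofReal (Real.sqrt (metricMatrix e y).det))
      ((volume : Measure (Euc m)).restrict e.target) :=
    (hdet.aemeasurable e.open_target.measurableSet).sqrt.ennreal_ofReal
  have hsymm : AEMeasurable e.symm ((volume : Measure (Euc m)).restrict e.target) :=
    e.continuousOn_symm.aemeasurable e.open_target.measurableSet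
  have hW : IsOpen (e.target ∩ e.symm ⁻¹' V) := e.isOpen_inter_preimage_symm hV
  have hWpos : e.target ∩ e.symm ⁻¹' V ⊆
      {y | ENNReal.ofReal (Real.sqrt (metricMatrix e y).det) ≠ 0} ∩ e.symm ⁻¹' V := fun y hy => by
    refine ⟨(ENNReal.ofReal_pos.2 (Real.sqrt_pos.2 ?_)).ne', hy.2⟩
    rw [metricMatrix_eq_chartGram he hy.1]
    exact (posDef_chartGram he (e.map_target hy.1)).det_pos
  obtain ⟨x, hxV, hxe⟩ := hVe
  have hWne : (e.target ∩ e.symm ⁻¹' V).Nonempty :=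
    ⟨e x, e.map_source hxe, by rwa [mem_preimage, e.left_inv hxe]⟩
  rw [chartVolume, Measure.map_apply_of_aemeasurable
    (hsymm.mono_ac (withDensity_absolutelyContinuous _ _)) hV.measurableSet, pos_iff_ne_zero,
    ne_eq, withDensity_apply_eq_zero' hdensity]
  intro hzero
  refine (hW.measure_pos volume hWne).ne' ?_
  rw [← Measure.restrict_eq_self volume (inter_subset_left (t := e.symm ⁻¹' V))]
  exact measure_mono_null hWpos hzero

instance isOpenPosMeasure_riemVolume [SigmaCompactSpace M] :
    (riemVolume m M).IsOpenPosMeasure := by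
  constructor
  rintro V hV ⟨x, hx⟩ hzero
  obtain ⟨p, hp⟩ := (chartPartition m M).exists_pos_of_mem (mem_univ x)
  have hcont : Continuous (chartPartition m M p) := (chartPartition m M p).contMDiff.continuous
  have hsub : tsupport (chartPartition m M p) ⊆ (chartAt (Euc m) p).source :=
    Classical.choose_spec
      (SmoothPartitionOfUnity.exists_isSubordinate_chartAt_source 𝓘(ℝ, Euc m) M) p
  have hpiece : (chartVolume (m := m) (chartAt (Euc m) p)).withDensity
      (fun x => ENNReal.ofReal (chartPartition m M p x)) V = 0 :=
    le_zero_iff.1 ((Measure.le_sum _ p V).trans hzero.le)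
  rw [withDensity_apply_eq_zero' hcont.measurable.ennreal_ofReal.aemeasurable] at hpiece
  refine (chartVolume_pos (chart_mem_atlas (Euc m) p)
    ((isOpen_lt continuous_const hcont).inter hV)
    ⟨x, ⟨hp, hx⟩, hsub (subset_tsupport _ hp.ne')⟩).ne' (measure_mono_null ?_ hpiece)
  exact inter_subset_inter_left _ fun y hy => (ENNReal.ofReal_pos.2 hy).ne'

end VolumePositivity

end WeakOneCoercive

section HopfRinow

open Metric

section LengthSpace

variable {X : Type*} [PseudoMetricSpace X] {o : X}

lemma totallyBounded_closedBall_of_forall_lt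
    (hlength : ∀ x R δ, 0 ≤ R → 0 < δ → dist o x < R + δ → ∃ z, dist o z ≤ R ∧ dist z x < δ)
    {T : ℝ} (hT : 0 < T)
    (h : ∀ R < T, TotallyBounded (closedBall o R)) : TotallyBounded (closedBall o T) := by
  refine totallyBounded_iff.2 fun ε hε => ?_
  have hlt : max 0 (T - ε / 4) < T := max_lt hT (by linarith)
  obtain ⟨t, htfin, ht⟩ := totallyBounded_iff.1 (h _ hlt) (ε / 2) (half_pos hε)
  refine ⟨t, htfin, fun x hx => ?_⟩
  obtain ⟨z, hoz, hzx⟩ := hlength x (max 0 (T - ε / 4)) (ε / 2) (le_max_left _ _) (half_pos hε)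
    (by linarith [mem_closedBall'.1 hx, le_max_right 0 (T - ε / 4)])
  obtain ⟨y, hyt, hzy⟩ := mem_iUnion₂.1 (ht (mem_closedBall'.2 hoz))
  exact mem_iUnion₂.2 ⟨y, hyt, mem_ball.2 (by
    linarith [mem_ball.1 hzy, dist_triangle_left x y z])⟩

lemma exists_lt_isCompact_closedBall [LocallyCompactSpace X]
    (hlength : ∀ x R δ, 0 ≤ R → 0 < δ → dist o x < R + δ → ∃ z, dist o z ≤ R ∧ dist z x < δ)
    {T : ℝ} (hT : 0 ≤ T) (h : IsCompact (closedBall o T)) :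
    ∃ T' > T, IsCompact (closedBall o T') := by
  obtain ⟨δ, hδ, hδc⟩ := h.exists_isCompact_cthickening
  refine ⟨T + δ / 2, by linarith, hδc.of_isClosed_subset isClosed_closedBall fun x hx => ?_⟩
  obtain ⟨z, hoz, hzx⟩ := hlength x T δ hT hδ (by linarith [mem_closedBall'.1 hx])
  exact mem_cthickening_of_dist_le x z δ _ (mem_closedBall'.2 hoz) (by rw [dist_comm]; exact hzx.le)

lemma isCompact_closedBall_of_lengthSpace [LocallyCompactSpace X] [CompleteSpace X]
    (hlength : ∀ x R δ, 0 ≤ R → 0 < δ → dist o x < R + δ → ∃ z, dist o z ≤ R ∧ dist z x < δ)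
    (R : ℝ) : IsCompact (closedBall o R) := by
  set S : Set ℝ := {R | IsCompact (closedBall o R)}
  have hlower : ∀ {R R' : ℝ}, R ≤ R' → R' ∈ S → R ∈ S := fun h hc =>
    hc.of_isClosed_subset isClosed_closedBall (closedBall_subset_closedBall h)
  obtain ⟨T₀, hT₀, hT₀S⟩ : ∃ T₀ > 0, T₀ ∈ S := by
    obtain ⟨T₀, hT₀, hc⟩ := exists_isCompact_closedBall o
    exact ⟨T₀, hT₀, hc⟩
  by_cases hbdd : BddAbove S
  · have hT : 0 < sSup S := hT₀.trans_le (le_csSup hbdd hT₀S)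
    have hTS : IsCompact (closedBall o (sSup S)) := by
      refine TotallyBounded.isCompact_of_isClosed
        (totallyBounded_closedBall_of_forall_lt hlength hT fun R hR => ?_) isClosed_closedBall
      obtain ⟨R', hR'S, hR'⟩ := exists_lt_of_lt_csSup ⟨T₀, hT₀S⟩ hR
      exact (hlower hR'.le hR'S).totallyBounded
    obtain ⟨T', hT', hT'S⟩ := exists_lt_isCompact_closedBall hlength hT.le hTS
    exact absurd (le_csSup hbdd hT'S) hT'.not_ge
  · obtain ⟨R', hR'S, hR'⟩ := not_bddAbove_iff.1 hbdd R
    exact hlower hR'.le hR'S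

end LengthSpace

variable {M : Type*} [MetricSpace M]

lemma exists_dist_le_dist_lt {E H : Type*} [NormedAddCommGroup E] [NormedSpace ℝ E]
    [TopologicalSpace H] (I : ModelWithCorners ℝ E H) [ChartedSpace H M]
    [RiemannianBundle (fun x : M => TangentSpace I x)] [IsRiemannianManifold I M] (o x : M)
    (R δ : ℝ) (hR : 0 ≤ R) (hδ : 0 < δ) (hx : dist o x < R + δ) :
    ∃ z, dist o z ≤ R ∧ dist z x < δ := by
  by_cases hxR : dist o x ≤ R
  · exact ⟨x, hxR, by simpa using hδ⟩
  push Not at hxR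
  have hedist : riemannianEDist I o x < ENNReal.ofReal (R + δ) := by
    rw [← IsRiemannianManifold.out (I := I), edist_dist]
    exact (ENNReal.ofReal_lt_ofReal_iff (by linarith)).2 hx
  obtain ⟨g, hg0, hg1, hgs, hgl⟩ := exists_lt_of_riemannianEDist_lt hedist
  have hcont : ContinuousOn (fun t => dist o (g t)) (Icc (0 : ℝ) 1) :=
    (continuous_const.dist continuous_id).comp_continuousOn hgs.continuousOn
  obtain ⟨t, ht, rfl : dist o (g t) = R⟩ : R ∈ (fun t => dist o (g t)) '' Icc (0 : ℝ) 1 :=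
    intermediate_value_Icc zero_le_one hcont ⟨by simpa [hg0] using hR, by simpa [hg1] using hxR.le⟩
  refine ⟨g t, le_rfl, ?_⟩
  have hleft := riemannianEDist_le_pathELength (hgs.mono (Icc_subset_Icc_right ht.2)) hg0 rfl ht.1
  have hright := riemannianEDist_le_pathELength (hgs.mono (Icc_subset_Icc_left ht.1)) rfl hg1 ht.2
  rw [← IsRiemannianManifold.out (I := I), edist_dist] at hleft hright
  have hsum := (add_le_add hleft hright).trans_lt ((pathELength_add ht.1 ht.2).trans_lt hgl)
  rw [← ENNReal.ofReal_add dist_nonneg dist_nonneg,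
    ENNReal.ofReal_lt_ofReal_iff (by linarith)] at hsum
  linarith

/-- The Hopf–Rinow theorem. -/
lemma properSpace_of_isRiemannianManifold {E H : Type*} [NormedAddCommGroup E] [NormedSpace ℝ E]
    [TopologicalSpace H] [LocallyCompactSpace H] (I : ModelWithCorners ℝ E H) [ChartedSpace H M]
    [RiemannianBundle (fun x : M => TangentSpace I x)] [IsRiemannianManifold I M]
    [CompleteSpace M] : ProperSpace M :=
  have : LocallyCompactSpace M := ChartedSpace.locallyCompactSpace H M
  ⟨fun o R => isCompact_closedBall_of_lengthSpace (exists_dist_le_dist_lt I o) R⟩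

end HopfRinow

section Mollification

open scoped Convolution NNReal

variable {E : Type*} [NormedAddCommGroup E] [NormedSpace ℝ E] [FiniteDimensional ℝ E]
  {K : ℝ≥0} {F : E → ℝ}

lemma lipschitzWith_normed_convolution [MeasurableSpace E] [BorelSpace E]
    (φ : ContDiffBump (0 : E)) (ν : Measure E) [ν.IsAddHaarMeasure] (hF : LipschitzWith K F) :
    LipschitzWith K (φ.normed ν ⋆[ContinuousLinearMap.lsmul ℝ ℝ, ν] F) := by
  have hint : ∀ x, Integrable (fun t => φ.normed ν t • F (x - t)) ν := fun x =>
    (φ.continuous_normed.smul (hF.continuous.comp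
      (continuous_const.sub continuous_id))).integrable_of_hasCompactSupport
        φ.hasCompactSupport_normed.smul_right
  refine LipschitzWith.of_dist_le_mul fun x y => ?_
  rw [Real.dist_eq, convolution_lsmul, convolution_lsmul, ← integral_sub (hint x) (hint y)]
  have hbound : ∀ t, ‖φ.normed ν t • F (x - t) - φ.normed ν t • F (y - t)‖ ≤
      φ.normed ν t * (K * dist x y) := fun t => by
    rw [← smul_sub, norm_smul, Real.norm_of_nonneg (φ.nonneg_normed t)]
    refine mul_le_mul_of_nonneg_left ?_ (φ.nonneg_normed t)
    simpa only [dist_sub_right, ← dist_eq_norm] using hF.dist_le_mul (x - t) (y - t)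
  refine (norm_integral_le_of_norm_le (φ.integrable_normed.mul_const _)
    (Eventually.of_forall hbound)).trans_eq ?_
  rw [integral_mul_const, φ.integral_normed, one_mul]

lemma exists_contDiff_lipschitzWith_abs_sub_le (hF : LipschitzWith K F) {δ : ℝ} (hδ : 0 < δ) :
    ∃ G : E → ℝ, ContDiff ℝ ∞ G ∧ LipschitzWith K G ∧ ∀ x, |G x - F x| ≤ δ := by
  borelize E
  have hε : 0 < δ / (K + 1) := by positivity
  set φ : ContDiffBump (0 : E) := ⟨δ / (K + 1) / 2, δ / (K + 1), half_pos hε, half_lt_self hε⟩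
  set ν : Measure E := Measure.addHaar
  refine ⟨φ.normed ν ⋆[ContinuousLinearMap.lsmul ℝ ℝ, ν] F,
    φ.hasCompactSupport_normed.contDiff_convolution_left _ φ.contDiff_normed
      hF.continuous.locallyIntegrable,
    lipschitzWith_normed_convolution φ ν hF, fun x => ?_⟩
  refine φ.dist_normed_convolution_le hF.continuous.aestronglyMeasurable fun y hy => ?_
  have hdist : dist y x * (K + 1) ≤ δ := ((lt_div_iff₀ (by positivity)).1 hy).le
  linarith [hF.dist_le_mul y x, dist_nonneg (x := y) (y := x), mul_add (dist y x) K 1,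
    mul_comm (dist y x) K]

end Mollification

section MeanValue

lemma dist_le_of_norm_mfderiv_le {E F H M : Type*} [NormedAddCommGroup E] [NormedSpace ℝ E]
    [NormedAddCommGroup F] [NormedSpace ℝ F] [TopologicalSpace H] {I : ModelWithCorners ℝ F H}
    [PseudoMetricSpace M] [ChartedSpace H M] [RiemannianBundle (fun x : M => TangentSpace I x)]
    [IsRiemannianManifold I M] {ψ : E → M} {y y' : E} {C : ℝ}
    (hψ : ∀ z ∈ segment ℝ y y', ContMDiffAt 𝓘(ℝ, E) I 1 ψ z)
    (hC : ∀ z ∈ segment ℝ y y', ‖mfderiv 𝓘(ℝ, E) I ψ z (y' - y)‖ ≤ C) :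
    dist (ψ y) (ψ y') ≤ C := by
  have hC0 : 0 ≤ C := (norm_nonneg _).trans (hC y (left_mem_segment ℝ y y'))
  rw [← ENNReal.ofReal_le_ofReal_iff hC0, ← edist_dist, IsRiemannianManifold.out (I := I)]
  let ℓ : ℝ →ᴬ[ℝ] E := ContinuousAffineMap.lineMap (R := ℝ) y y'
  have hℓ_apply : ∀ t, ℓ t = AffineMap.lineMap y y' t := fun t => by
    simp [ℓ, ContinuousAffineMap.coe_lineMap_eq]
  have hℓ_mem : ∀ t ∈ Icc (0 : ℝ) 1, ℓ t ∈ segment ℝ y y' := fun t ht => by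
    rw [hℓ_apply, segment_eq_image_lineMap]
    exact mem_image_of_mem _ ht
  have hℓ_smooth : ContMDiff 𝓘(ℝ, ℝ) 𝓘(ℝ, E) 1 ℓ :=
    contMDiff_iff_contDiff.2 (ContinuousAffineMap.contDiff _)
  refine (riemannianEDist_le_pathELength (γ := ψ ∘ ℓ) (a := 0) (b := 1)
    (fun t ht => ((hψ _ (hℓ_mem t ht)).comp t hℓ_smooth.contMDiffAt).contMDiffWithinAt)
    (by simp [hℓ_apply]) (by simp [hℓ_apply]) zero_le_one).trans ?_
  rw [pathELength_eq_lintegral_mfderiv_Icc]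
  have hspeed : ∀ t ∈ Icc (0 : ℝ) 1,
      ‖mfderiv 𝓘(ℝ, ℝ) I (ψ ∘ ℓ) t 1‖ₑ ≤ ENNReal.ofReal C := fun t ht => by
    have hℓ_deriv : mfderiv 𝓘(ℝ, ℝ) 𝓘(ℝ, E) ℓ t 1 = (y' - y : E) := by
      have h : fderiv ℝ ℓ t 1 = y' - y := by simp [ℓ]
      rw [mfderiv_eq_fderiv]
      exact h
    have hcomp : mfderiv 𝓘(ℝ, ℝ) I (ψ ∘ ℓ) t 1 = mfderiv 𝓘(ℝ, E) I ψ (ℓ t) (y' - y) := by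
      rw [mfderiv_comp t ((hψ _ (hℓ_mem t ht)).mdifferentiableAt one_ne_zero)
        (hℓ_smooth.mdifferentiableAt one_ne_zero)]
      exact congrArg _ hℓ_deriv
    rw [hcomp, ← ofReal_norm]
    exact ENNReal.ofReal_le_ofReal (hC _ (hℓ_mem t ht))
  refine (setLIntegral_mono' measurableSet_Icc hspeed).trans_eq ?_
  simp

end MeanValue

namespace WeakOneCoercive

section NormalizedChart

variable {m : ℕ} {M : Type*} [MetricSpace M] [ChartedSpace (Euc m) M]

/-- The chart at `p` followed by the inverse of its differential at `p`: a chart with values in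
`T_p M` whose differential at `p` is the identity, so that it almost preserves lengths near `p`. -/
noncomputable def normalizedChart (p x : M) : Tan (m := m) p :=
  ofCoord (chartAt (Euc m) p) p (chartAt (Euc m) p x)

/-- The local inverse of `normalizedChart p`. -/
noncomputable def normalizedChartSymm (p : M) (ζ : Tan (m := m) p) : M :=
  (chartAt (Euc m) p).symm (chartD (chartAt (Euc m) p) p ζ)

variable [IsManifold 𝓘(ℝ, Euc m) ∞ M]

lemma chartD_normalizedChart (p x : M) :
    chartD (chartAt (Euc m) p) p (normalizedChart p x) = chartAt (Euc m) p x :=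
  chartD_ofCoord (chart_mem_atlas (Euc m) p) (mem_chart_source (Euc m) p) _

lemma normalizedChartSymm_normalizedChart {p x : M} (hx : x ∈ (chartAt (Euc m) p).source) :
    normalizedChartSymm p (normalizedChart (m := m) p x) = x := by
  rw [normalizedChartSymm, chartD_normalizedChart, OpenPartialHomeomorph.left_inv _ hx]

lemma continuousLinearMapAt_eq_chartD (p : M) {x : M} (hx : x ∈ (chartAt (Euc m) p).source)
    (ξ : Tan (m := m) x) :
    (trivializationAt (Euc m) (TangentSpace 𝓘(ℝ, Euc m)) p).continuousLinearMapAt ℝ x ξ =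
      chartD (chartAt (Euc m) p) x ξ := by
  rw [TangentBundle.continuousLinearMapAt_trivializationAt hx]
  rfl

lemma symmL_eq_ofCoord (p : M) {x : M} (hx : x ∈ (chartAt (Euc m) p).source) (a : Euc m) :
    (trivializationAt (Euc m) (TangentSpace 𝓘(ℝ, Euc m)) p).symmL ℝ x a =
      ofCoord (chartAt (Euc m) p) x a := by
  have hbase : x ∈ (trivializationAt (Euc m) (TangentSpace 𝓘(ℝ, Euc m)) p).baseSet := by
    simpa using hx
  have h := Trivialization.symmL_continuousLinearMapAt (R := ℝ)
    (trivializationAt (Euc m) (TangentSpace 𝓘(ℝ, Euc m)) p) hbase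
    (ofCoord (chartAt (Euc m) p) x a)
  rwa [continuousLinearMapAt_eq_chartD p hx, chartD_ofCoord (chart_mem_atlas (Euc m) p) hx] at h

variable [RiemannianBundle (fun x : M => TangentSpace 𝓘(ℝ, Euc m) x)]

lemma hasMFDerivAt_normalizedChart {p x : M} (hx : x ∈ (chartAt (Euc m) p).source) :
    HasMFDerivAt 𝓘(ℝ, Euc m) 𝓘(ℝ, Tan (m := m) p) (normalizedChart (m := m) p) x
      ((chartDL (chartAt (Euc m) p) p).inverse.comp (chartDL (chartAt (Euc m) p) x)) :=
  (chartDL (chartAt (Euc m) p) p).inverse.hasFDerivAt.hasMFDerivAt.comp x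
    (mdifferentiableAt_atlas (chart_mem_atlas (Euc m) p) hx).hasMFDerivAt

lemma contMDiffOn_normalizedChart (p : M) :
    ContMDiffOn 𝓘(ℝ, Euc m) 𝓘(ℝ, Tan (m := m) p) ∞ (normalizedChart (m := m) p)
      (chartAt (Euc m) p).source :=
  (chartDL (chartAt (Euc m) p) p).inverse.contDiff.contMDiff.comp_contMDiffOn
    (contMDiffOn_of_mem_maximalAtlas (IsManifold.subset_maximalAtlas (chart_mem_atlas (Euc m) p)))

lemma contMDiffAt_normalizedChartSymm {p : M} {ζ : Tan (m := m) p}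
    (hζ : chartD (chartAt (Euc m) p) p ζ ∈ (chartAt (Euc m) p).target) :
    ContMDiffAt 𝓘(ℝ, Tan (m := m) p) 𝓘(ℝ, Euc m) 1 (normalizedChartSymm p) ζ :=
  ((contMDiffOn_symm_of_mem_maximalAtlas (IsManifold.subset_maximalAtlas
    (chart_mem_atlas (Euc m) p))).contMDiffAt
      ((chartAt (Euc m) p).open_target.mem_nhds hζ)).comp ζ
    (chartDL (chartAt (Euc m) p) p).contDiff.contMDiff.contMDiffAt

lemma mfderiv_normalizedChartSymm {p : M} {ζ : Tan (m := m) p}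
    (hζ : chartD (chartAt (Euc m) p) p ζ ∈ (chartAt (Euc m) p).target) (a : Tan (m := m) p) :
    mfderiv 𝓘(ℝ, Tan (m := m) p) 𝓘(ℝ, Euc m) (normalizedChartSymm p) ζ a =
      ofCoord (chartAt (Euc m) p) (normalizedChartSymm p ζ) (chartD (chartAt (Euc m) p) p a) := by
  have he := chart_mem_atlas (Euc m) p
  have hderiv : HasMFDerivAt 𝓘(ℝ, Tan (m := m) p) 𝓘(ℝ, Euc m) (normalizedChartSymm p) ζ _ :=
    (mdifferentiableAt_atlas_symm he hζ).hasMFDerivAt.comp ζ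
      (chartDL (chartAt (Euc m) p) p).hasFDerivAt.hasMFDerivAt
  rw [hderiv.mfderiv]
  exact chartSymmD_eq_ofCoord he hζ _

variable [IsContMDiffRiemannianBundle 𝓘(ℝ, Euc m) ∞ (Euc m)
  (fun x : M => TangentSpace 𝓘(ℝ, Euc m) x)] (p : M) {η : ℝ}

lemma eventually_norm_ofCoord_chartD_le (hη : 1 < η) :
    ∀ᶠ x in 𝓝 p, ∀ ξ : Tan (m := m) x,
      ‖ofCoord (chartAt (Euc m) p) p (chartD (chartAt (Euc m) p) x ξ)‖ ≤ η * ‖ξ‖ := by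
  have hp := mem_chart_source (Euc m) p
  filter_upwards [(chartAt (Euc m) p).open_source.mem_nhds hp,
    eventually_norm_symmL_trivializationAt_self_comp_lt (Euc m)
      (fun x : M => TangentSpace 𝓘(ℝ, Euc m) x) p hη] with x hx hlt ξ
  have h := ContinuousLinearMap.le_of_opNorm_le _ hlt.le ξ
  rwa [ContinuousLinearMap.comp_apply, continuousLinearMapAt_eq_chartD p hx,
    symmL_eq_ofCoord p hp] at h

lemma eventually_norm_ofCoord_le (hη : 1 < η) :
    ∀ᶠ x in 𝓝 p, ∀ ζ : Tan (m := m) p,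
      ‖ofCoord (chartAt (Euc m) p) x (chartD (chartAt (Euc m) p) p ζ)‖ ≤ η * ‖ζ‖ := by
  have hp := mem_chart_source (Euc m) p
  filter_upwards [(chartAt (Euc m) p).open_source.mem_nhds hp,
    eventually_norm_symmL_trivializationAt_comp_self_lt (Euc m)
      (fun x : M => TangentSpace 𝓘(ℝ, Euc m) x) p hη] with x hx hlt ζ
  have h := ContinuousLinearMap.le_of_opNorm_le _ hlt.le ζ
  rwa [ContinuousLinearMap.comp_apply, continuousLinearMapAt_eq_chartD p hp,
    symmL_eq_ofCoord p hx] at h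

lemma eventually_normalizedChartSymm (hη : 1 < η) :
    ∀ᶠ ζ in 𝓝 (normalizedChart (m := m) p p),
      chartD (chartAt (Euc m) p) p ζ ∈ (chartAt (Euc m) p).target ∧
      ∀ a : Tan (m := m) p,
        ‖mfderiv 𝓘(ℝ, Tan (m := m) p) 𝓘(ℝ, Euc m) (normalizedChartSymm p) ζ a‖ ≤ η * ‖a‖ := by
  have hp := mem_chart_source (Euc m) p
  have htarget : ∀ᶠ ζ in 𝓝 (normalizedChart (m := m) p p),
      chartD (chartAt (Euc m) p) p ζ ∈ (chartAt (Euc m) p).target := by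
    refine (chartDL (chartAt (Euc m) p) p).continuous.continuousAt.preimage_mem_nhds ?_
    rw [← chartD_eq_chartDL, chartD_normalizedChart]
    exact (chartAt (Euc m) p).open_target.mem_nhds ((chartAt (Euc m) p).map_source hp)
  have hcont : Tendsto (normalizedChartSymm p) (𝓝 (normalizedChart (m := m) p p)) (𝓝 p) := by
    have h := (contMDiffAt_normalizedChartSymm htarget.self_of_nhds).continuousAt.tendsto
    rwa [normalizedChartSymm_normalizedChart hp] at h
  filter_upwards [htarget, hcont.eventually (eventually_norm_ofCoord_le (m := m) p hη)]
    with ζ hζ hle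
  exact ⟨hζ, fun a => (congrArg norm (mfderiv_normalizedChartSymm hζ a)).trans_le (hle a)⟩

variable [IsRiemannianManifold 𝓘(ℝ, Euc m) M]

lemma exists_lipschitzOnWith_normalizedChartSymm (hη : 1 < η) :
    ∃ s > 0, LipschitzOnWith η.toNNReal (normalizedChartSymm (m := m) p)
      (Metric.ball (normalizedChart p p) s) := by
  obtain ⟨s, hs, hball⟩ :=
    Metric.eventually_nhds_iff_ball.1 (eventually_normalizedChartSymm (m := m) p hη)
  refine ⟨s, hs, LipschitzOnWith.of_dist_le_mul fun ζ hζ ζ' hζ' => ?_⟩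
  have hseg := (convex_ball (normalizedChart (m := m) p p) s).segment_subset hζ hζ'
  rw [Real.coe_toNNReal _ (zero_le_one.trans hη.le), dist_comm ζ, dist_eq_norm]
  exact dist_le_of_norm_mfderiv_le
    (fun z hz => contMDiffAt_normalizedChartSymm (hball z (hseg hz)).1)
    fun z hz => (hball z (hseg hz)).2 _

end NormalizedChart

section GradientCalculus

variable {m : ℕ} {M : Type*} [MetricSpace M] [ChartedSpace (Euc m) M]
  {U V : M → ℝ} {x : M}

lemma mdifferentiableAt_finset_sum {ι : Type*} {W : ι → M → ℝ} (s : Finset ι)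
    (hW : ∀ i ∈ s, MDifferentiableAt 𝓘(ℝ, Euc m) 𝓘(ℝ, ℝ) (W i) x) :
    MDifferentiableAt 𝓘(ℝ, Euc m) 𝓘(ℝ, ℝ) (fun y => ∑ i ∈ s, W i y) x := by
  classical
  induction s using Finset.induction_on with
  | empty => simpa only [Finset.sum_empty] using mdifferentiableAt_const
  | insert i s hi ih =>
    simp only [Finset.sum_insert hi]
    exact (hW i (Finset.mem_insert_self i s)).add
      (ih fun j hj => hW j (Finset.mem_insert_of_mem hj))

variable [RiemannianBundle (fun x : M => TangentSpace 𝓘(ℝ, Euc m) x)]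

lemma riemGradient_congr (h : U =ᶠ[𝓝 x] V) :
    riemGradient (m := m) U x = riemGradient V x := by
  rw [riemGradient, riemGradient, h.mfderiv_eq]

lemma norm_riemGradient_le {C : ℝ} (hC : 0 ≤ C)
    (h : ∀ ξ : Tan (m := m) x, mvfderiv 𝓘(ℝ, Euc m) U x ξ ≤ C * ‖ξ‖) :
    ‖riemGradient (m := m) U x‖ ≤ C := by
  by_contra! hlt
  have hle := h (riemGradient U x)
  rw [← inner_riemGradient, real_inner_self_eq_norm_mul_norm] at hle
  exact hlt.not_ge (le_of_mul_le_mul_right hle (hC.trans_lt hlt))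

lemma riemGradient_const (c : ℝ) : riemGradient (m := m) (fun _ : M => c) x = 0 :=
  riemGradient_eq_of_mvfderiv fun ξ => by
    rw [mvfderiv_const, inner_zero_left, zero_apply]

lemma riemGradient_comp {h : ℝ → ℝ} {h' : ℝ} (hU : MDifferentiableAt 𝓘(ℝ, Euc m) 𝓘(ℝ, ℝ) U x)
    (hh : HasDerivAt h h' (U x)) :
    riemGradient (m := m) (fun y => h (U y)) x = h' • riemGradient U x := by
  have hcomp : HasMFDerivAt 𝓘(ℝ, Euc m) 𝓘(ℝ, ℝ) (fun y => h (U y)) x _ :=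
    hh.hasFDerivAt.hasMFDerivAt.comp x hU.hasMFDerivAt
  refine riemGradient_eq_of_mvfderiv fun ξ => ?_
  rw [mvfderiv, hcomp.mfderiv, real_inner_smul_left, inner_riemGradient, mul_comm]
  rfl

lemma riemGradient_add (hU : MDifferentiableAt 𝓘(ℝ, Euc m) 𝓘(ℝ, ℝ) U x)
    (hV : MDifferentiableAt 𝓘(ℝ, Euc m) 𝓘(ℝ, ℝ) V x) :
    riemGradient (m := m) (fun y => U y + V y) x = riemGradient U x + riemGradient V x :=
  riemGradient_eq_of_mvfderiv fun ξ => by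
    rw [mvfderiv_fun_add hU hV, inner_add_left, inner_riemGradient, inner_riemGradient,
      add_apply]

lemma riemGradient_sub (hU : MDifferentiableAt 𝓘(ℝ, Euc m) 𝓘(ℝ, ℝ) U x)
    (hV : MDifferentiableAt 𝓘(ℝ, Euc m) 𝓘(ℝ, ℝ) V x) :
    riemGradient (m := m) (fun y => U y - V y) x = riemGradient U x - riemGradient V x :=
  riemGradient_eq_of_mvfderiv fun ξ => by
    rw [mvfderiv_fun_sub hU hV, inner_sub_left, inner_riemGradient, inner_riemGradient,
      sub_apply]

lemma riemGradient_mul (hU : MDifferentiableAt 𝓘(ℝ, Euc m) 𝓘(ℝ, ℝ) U x)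
    (hV : MDifferentiableAt 𝓘(ℝ, Euc m) 𝓘(ℝ, ℝ) V x) :
    riemGradient (m := m) (fun y => U y * V y) x =
      U x • riemGradient V x + V x • riemGradient U x :=
  riemGradient_eq_of_mvfderiv fun ξ => by
    rw [mvfderiv_fun_mul hU hV, inner_add_left, real_inner_smul_left, real_inner_smul_left,
      inner_riemGradient, inner_riemGradient, add_apply,
      smul_apply, smul_apply, smul_eq_mul, smul_eq_mul]

lemma riemGradient_sum {ι : Type*} {W : ι → M → ℝ} (s : Finset ι)
    (hW : ∀ i ∈ s, MDifferentiableAt 𝓘(ℝ, Euc m) 𝓘(ℝ, ℝ) (W i) x) :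
    riemGradient (m := m) (fun y => ∑ i ∈ s, W i y) x = ∑ i ∈ s, riemGradient (W i) x := by
  classical
  induction s using Finset.induction_on with
  | empty => simpa only [Finset.sum_empty] using riemGradient_const 0
  | insert i s hi ih =>
    have hWs := fun j hj => hW j (Finset.mem_insert_of_mem hj)
    simp only [Finset.sum_insert hi]
    rw [riemGradient_add (hW i (Finset.mem_insert_self i s)) (mdifferentiableAt_finset_sum s hWs),
      ih hWs]

/- The constant `c` is free because the gradients of the `χ i` add up to zero. -/
lemma riemGradient_finsum_smul {ι : Type*} (χ : SmoothPartitionOfUnity ι 𝓘(ℝ, Euc m) M univ)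
    {ρ : ι → M → ℝ} (c : ℝ)
    (hρ : ∀ i, x ∈ tsupport (χ i) → MDifferentiableAt 𝓘(ℝ, Euc m) 𝓘(ℝ, ℝ) (ρ i) x) :
    riemGradient (m := m) (fun y => ∑ᶠ i, χ i y • ρ i y) x =
      ∑ i ∈ χ.fintsupport x,
        (χ i x • riemGradient (ρ i) x + (ρ i x - c) • riemGradient (χ i) x) := by
  have hlocal : (fun y => ∑ᶠ i, χ i y • ρ i y) =ᶠ[𝓝 x]
      fun y => (∑ i ∈ χ.fintsupport x, χ i y * (ρ i y - c)) + c := by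
    filter_upwards [χ.eventually_finsupport_subset x] with y hy
    have hsum : ∑ᶠ i, χ i y • ρ i y = ∑ i ∈ χ.fintsupport x, χ i y • ρ i y := by
      rw [← χ.sum_finsupport_smul_eq_finsum y ρ]
      refine Finset.sum_subset hy fun i _ hi => ?_
      rw [χ.mem_finsupport, Function.notMem_support] at hi
      rw [hi, zero_smul]
    rw [hsum]
    simp only [mul_sub, Finset.sum_sub_distrib, ← Finset.sum_mul,
      χ.sum_finsupport' y (mem_univ y) hy, one_mul, smul_eq_mul, sub_add_cancel]
  have hχ : ∀ i, MDifferentiableAt 𝓘(ℝ, Euc m) 𝓘(ℝ, ℝ) (χ i) x := fun i =>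
    (χ i).contMDiff.contMDiffAt.mdifferentiableAt (by simp)
  have hρF : ∀ i ∈ χ.fintsupport x, MDifferentiableAt 𝓘(ℝ, Euc m) 𝓘(ℝ, ℝ) (ρ i) x := fun i hi =>
    hρ i ((χ.mem_fintsupport_iff x i).1 hi)
  have hρc : ∀ i ∈ χ.fintsupport x,
      MDifferentiableAt 𝓘(ℝ, Euc m) 𝓘(ℝ, ℝ) (fun y => ρ i y - c) x := fun i hi =>
    (hρF i hi).sub mdifferentiableAt_const
  have hprod : ∀ i ∈ χ.fintsupport x,
      MDifferentiableAt 𝓘(ℝ, Euc m) 𝓘(ℝ, ℝ) (fun y => χ i y * (ρ i y - c)) x := fun i hi =>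
    (hχ i).mul (hρc i hi)
  rw [riemGradient_congr hlocal, riemGradient_add (mdifferentiableAt_finset_sum _ hprod)
    mdifferentiableAt_const, riemGradient_const, add_zero, riemGradient_sum _ hprod]
  refine Finset.sum_congr rfl fun i hi => ?_
  rw [riemGradient_mul (hχ i) (hρc i hi), riemGradient_sub (hρF i hi) mdifferentiableAt_const,
    riemGradient_const, sub_zero]

end GradientCalculus

section GradientBounds

variable {m : ℕ} {M : Type*} [MetricSpace M] [ChartedSpace (Euc m) M]
  [IsManifold 𝓘(ℝ, Euc m) ∞ M]
  [RiemannianBundle (fun x : M => TangentSpace 𝓘(ℝ, Euc m) x)]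
  [IsContMDiffRiemannianBundle 𝓘(ℝ, Euc m) ∞ (Euc m)
    (fun x : M => TangentSpace 𝓘(ℝ, Euc m) x)]

lemma eventually_norm_riemGradient_le {U : M → ℝ} (hU : ContMDiff 𝓘(ℝ, Euc m) 𝓘(ℝ, ℝ) 1 U)
    (p : M) : ∃ C : ℝ, ∀ᶠ x in 𝓝 p, ‖riemGradient (m := m) U x‖ ≤ C := by
  set e := chartAt (Euc m) p
  have he : e ∈ atlas (Euc m) M := chart_mem_atlas (Euc m) p
  have hp : e.source ∈ 𝓝 p := e.open_source.mem_nhds (mem_chart_source (Euc m) p)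
  set D : Fin m → M → ℝ := fun i x => mvfderiv 𝓘(ℝ, Euc m) U x (coordFrame e i x) with hD
  obtain ⟨C, hC, hcoord⟩ := eventually_norm_trivializationAt_lt (Euc m)
    (fun x : M => TangentSpace 𝓘(ℝ, Euc m) x) p
  have hbound : ∀ i, ∀ᶠ x in 𝓝 p, |D i x| < |D i p| + 1 := fun i => by
    have hcont := continuousOn_mvfderiv_coordFrame isOpen_univ hU.contMDiffOn he i
    rw [inter_univ] at hcont
    exact (hcont.continuousAt hp).abs.eventually_lt_const (lt_add_one _)
  refine ⟨C * ∑ i, (|D i p| + 1), ?_⟩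
  filter_upwards [hcoord, hp, eventually_all.2 hbound] with x hx hxe hDx
  refine norm_riemGradient_le (by positivity) fun ξ => ?_
  have hξ : ∀ i, |(chartD e x ξ) i| ≤ C * ‖ξ‖ := fun i => by
    have hle := ContinuousLinearMap.le_of_opNorm_le _ hx.le ξ
    rw [continuousLinearMapAt_eq_chartD p hxe] at hle
    exact (PiLp.norm_apply_le (chartD e x ξ) i).trans hle
  calc mvfderiv 𝓘(ℝ, Euc m) U x ξ
      = ∑ i, (chartD e x ξ) i * D i x := by
        conv_lhs => rw [eq_sum_coordFrame he hxe ξ]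
        simp only [map_sum, map_smul, smul_eq_mul, hD]
    _ ≤ ∑ i, (C * ‖ξ‖) * (|D i p| + 1) := by
        refine Finset.sum_le_sum fun i _ => (le_abs_self _).trans ?_
        rw [abs_mul]
        exact mul_le_mul (hξ i) (hDx i).le (abs_nonneg _) (by positivity)
    _ = C * (∑ i, (|D i p| + 1)) * ‖ξ‖ := by rw [← Finset.mul_sum]; ring

lemma exists_norm_riemGradient_le_of_isCompact {U : M → ℝ}
    (hU : ContMDiff 𝓘(ℝ, Euc m) 𝓘(ℝ, ℝ) 1 U) {K : Set M} (hK : IsCompact K) :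
    ∃ C : ℝ, ∀ x ∈ K, ‖riemGradient (m := m) U x‖ ≤ C := by
  refine hK.induction_on (p := fun s => ∃ C : ℝ, ∀ x ∈ s, ‖riemGradient (m := m) U x‖ ≤ C)
    ⟨0, by simp⟩ (fun s t hst ⟨C, hC⟩ => ⟨C, fun x hx => hC x (hst hx)⟩) ?_ fun x _ => ?_
  · rintro s t ⟨C, hC⟩ ⟨D, hD⟩
    exact ⟨max C D, fun x hx => hx.elim (fun hx => (hC x hx).trans (le_max_left _ _))
      fun hx => (hD x hx).trans (le_max_right _ _)⟩
  · obtain ⟨C, hC⟩ := eventually_norm_riemGradient_le hU x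
    exact ⟨_, mem_nhdsWithin_of_mem_nhds hC, C, fun y hy => hy⟩

variable [SigmaCompactSpace M]

lemma exists_smoothPartitionOfUnity_norm_riemGradient_le {U : M → Set M}
    (hU : ∀ p, U p ∈ 𝓝 p) :
    ∃ t : Set M, t.Countable ∧ ∃ χ : SmoothPartitionOfUnity t 𝓘(ℝ, Euc m) M univ,
      (∀ i, tsupport (χ i) ⊆ U i) ∧ ∃ C : t → ℝ, ∀ i, 0 < C i ∧
        ∀ x ∈ tsupport (χ i), ‖riemGradient (m := m) (χ i) x‖ ≤ C i := by
  have : LocallyCompactSpace M := ChartedSpace.locallyCompactSpace (Euc m) M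
  have : SecondCountableTopology M := ChartedSpace.secondCountable_of_sigmaCompact (Euc m) M
  choose K hK hKp using fun p : M => exists_compact_mem_nhds p
  obtain ⟨t, ht, hcover⟩ := TopologicalSpace.countable_cover_nhds
    (f := fun p => interior (U p) ∩ interior (K p))
    fun p => inter_mem (interior_mem_nhds.2 (hU p)) (interior_mem_nhds.2 (hKp p))
  obtain ⟨χ, hχ⟩ := SmoothPartitionOfUnity.exists_isSubordinate 𝓘(ℝ, Euc m) isClosed_univ
    (fun p : t => interior (U p) ∩ interior (K p))
    (fun _ => isOpen_interior.inter isOpen_interior) (by rw [← hcover, biUnion_eq_iUnion])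
  choose C hC using fun i : t => exists_norm_riemGradient_le_of_isCompact
    ((χ i).contMDiff.of_le (m := 1) (by simp)) (hK i)
  refine ⟨t, ht, χ, fun i => (hχ i).trans (inter_subset_left.trans interior_subset),
    fun i => |C i| + 1, fun i => ⟨by positivity, fun x hx => ?_⟩⟩
  exact (hC i x (interior_subset (hχ i hx).2)).trans
    ((le_abs_self _).trans (lt_add_one _).le)

end GradientBounds

section Smoothing

variable {m : ℕ} {M : Type*} [MetricSpace M] [ChartedSpace (Euc m) M]
  [IsManifold 𝓘(ℝ, Euc m) ∞ M]
  [RiemannianBundle (fun x : M => TangentSpace 𝓘(ℝ, Euc m) x)]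

lemma norm_riemGradient_comp_normalizedChart_le {p x : M} {G : Tan (m := m) p → ℝ} {η : ℝ}
    (hη : 0 ≤ η) (hx : x ∈ (chartAt (Euc m) p).source)
    (hG : ContDiff ℝ ∞ G) (hGlip : LipschitzWith η.toNNReal G)
    (hle : ∀ ξ : Tan (m := m) x,
      ‖ofCoord (chartAt (Euc m) p) p (chartD (chartAt (Euc m) p) x ξ)‖ ≤ η * ‖ξ‖) :
    ‖riemGradient (m := m) (fun y => G (normalizedChart p y)) x‖ ≤ η * η := by
  have hderiv : HasMFDerivAt 𝓘(ℝ, Euc m) 𝓘(ℝ, ℝ) (fun y => G (normalizedChart p y)) x _ :=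
    (hG.differentiable (by simp) (normalizedChart p x)).hasFDerivAt.hasMFDerivAt.comp x
      (hasMFDerivAt_normalizedChart hx)
  have hopNorm := norm_fderiv_le_of_lipschitz ℝ hGlip (x₀ := normalizedChart p x)
  rw [Real.coe_toNNReal _ hη] at hopNorm
  refine norm_riemGradient_le (mul_nonneg hη hη) fun ξ => (Real.le_norm_self _).trans ?_
  rw [mvfderiv, hderiv.mfderiv, mul_assoc]
  exact (ContinuousLinearMap.le_of_opNorm_le _ hopNorm _).trans
    (mul_le_mul_of_nonneg_left (hle ξ) hη)

variable [IsContMDiffRiemannianBundle 𝓘(ℝ, Euc m) ∞ (Euc m)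
    (fun x : M => TangentSpace 𝓘(ℝ, Euc m) x)] [IsRiemannianManifold 𝓘(ℝ, Euc m) M]
  {r : M → ℝ} {η : ℝ}

lemma exists_local_smooth_approx (hr : LipschitzWith 1 r) (hη : 1 < η) (p : M) :
    ∃ U ∈ 𝓝 p, ∀ δ > 0, ∃ ρ : M → ℝ, ∀ x ∈ U, ContMDiffAt 𝓘(ℝ, Euc m) 𝓘(ℝ, ℝ) ∞ ρ x ∧
      |ρ x - r x| ≤ δ ∧ ‖riemGradient (m := m) ρ x‖ ≤ η * η := by
  have : FiniteDimensional ℝ (Tan (m := m) p) := inferInstanceAs (FiniteDimensional ℝ (Euc m))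
  set e := chartAt (Euc m) p
  have hp : e.source ∈ 𝓝 p := e.open_source.mem_nhds (mem_chart_source (Euc m) p)
  obtain ⟨s, hs, hlip⟩ := exists_lipschitzOnWith_normalizedChartSymm (m := m) p hη
  have hball : normalizedChart (m := m) p ⁻¹' Metric.ball (normalizedChart p p) s ∈ 𝓝 p :=
    ((contMDiffOn_normalizedChart p).contMDiffAt hp).continuousAt.preimage_mem_nhds
      (Metric.ball_mem_nhds _ hs)
  obtain ⟨F, hF, hFr⟩ := (hr.comp_lipschitzOnWith hlip).extend_real
  rw [one_mul] at hF
  refine ⟨_, inter_mem (inter_mem hp hball) (eventually_norm_ofCoord_chartD_le (m := m) p hη),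
    fun δ hδ => ?_⟩
  obtain ⟨G, hG, hGlip, hGF⟩ := exists_contDiff_lipschitzWith_abs_sub_le hF hδ
  refine ⟨fun x => G (normalizedChart p x), ?_⟩
  rintro x ⟨⟨hxe, hxs⟩, hle⟩
  refine ⟨hG.contMDiff.contMDiffAt.comp x ((contMDiffOn_normalizedChart p).contMDiffAt
    (e.open_source.mem_nhds hxe)), ?_, norm_riemGradient_comp_normalizedChart_le
      (zero_le_one.trans hη.le) hxe hG hGlip hle⟩
  have hrx : r x = F (normalizedChart p x) := by
    rw [← hFr hxs, Function.comp_apply, normalizedChartSymm_normalizedChart hxe]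
  simpa only [hrx] using hGF (normalizedChart p x)

variable [SigmaCompactSpace M]

lemma exists_smooth_approx_of_lipschitz (hr : LipschitzWith 1 r) (hη : 1 < η) :
    ∃ ρ : M → ℝ, ContMDiff 𝓘(ℝ, Euc m) 𝓘(ℝ, ℝ) ∞ ρ ∧
      ∀ x, |ρ x - r x| ≤ 1 ∧ ‖riemGradient (m := m) ρ x‖ ≤ η := by
  have hsqrt : 1 < √((1 + η) / 2) := Real.lt_sqrt_of_sq_lt (by linarith)
  choose U hU hloc using exists_local_smooth_approx (m := m) hr hsqrt
  obtain ⟨t, ht, χ, hχU, C, hC⟩ := exists_smoothPartitionOfUnity_norm_riemGradient_le (m := m) hU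
  have : Countable t := ht
  obtain ⟨ε, hε, hεsum⟩ := (countable_univ (α := t)).exists_pos_forall_sum_le
    (show 0 < (η - 1) / 2 by linarith)
  choose ρ hρ using fun i : t => hloc i (min 1 (ε i / C i))
    (lt_min one_pos (div_pos (hε i) (hC i).1))
  have hρχ := fun i x hx => hρ i x (hχU i hx)
  refine ⟨fun x => ∑ᶠ i, χ i x • ρ i x, χ.contMDiff_finsum_smul fun i x hx => (hρχ i x hx).1,
    fun x => ⟨?_, ?_⟩⟩
  · have hmem : ∀ i, χ i x ≠ 0 → ρ i x ∈ Metric.closedBall (r x) 1 := fun i hi =>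
      (hρχ i x (subset_tsupport _ hi)).2.1.trans (min_le_left _ _)
    exact χ.finsum_smul_mem_convex (mem_univ x) hmem (convex_closedBall _ _)
  · have hterm : ∀ i ∈ χ.fintsupport x, ‖χ i x • riemGradient (m := m) (ρ i) x +
        (ρ i x - r x) • riemGradient (m := m) (χ i) x‖ ≤ χ i x * ((1 + η) / 2) + ε i := by
      intro i hi
      have hx := (χ.mem_fintsupport_iff x i).1 hi
      obtain ⟨-, hclose, hgrad⟩ := hρχ i x hx
      rw [Real.mul_self_sqrt (by linarith)] at hgrad
      refine (norm_add_le _ _).trans (add_le_add ?_ ?_)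
      · rw [norm_smul, Real.norm_of_nonneg (χ.nonneg i x)]
        exact mul_le_mul_of_nonneg_left hgrad (χ.nonneg i x)
      · rw [norm_smul, ← div_mul_cancel₀ (ε i) (hC i).1.ne']
        exact mul_le_mul (hclose.trans (min_le_right _ _)) ((hC i).2 x hx) (norm_nonneg _)
          (div_pos (hε i) (hC i).1).le
    rw [riemGradient_finsum_smul χ (r x) fun i hx =>
      (hρχ i x hx).1.mdifferentiableAt (by simp)]
    refine (norm_sum_le_of_le _ hterm).trans ?_
    rw [Finset.sum_add_distrib, ← Finset.sum_mul,
      χ.sum_finsupport' x (mem_univ x) (χ.finsupport_subset_fintsupport x)]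
    linarith [hεsum (χ.fintsupport x) (subset_univ _)]

end Smoothing

end WeakOneCoercive

section Convergence

variable {α : Type*} [MeasurableSpace α] {ν : Measure α}

lemma setLIntegral_lt_top_of_le_const_mul {s : Set α} (hs : MeasurableSet s) {C : ENNReal}
    (hC : C ≠ ⊤) {f g : α → ENNReal} (hfg : ∀ x ∈ s, f x ≤ C * g x)
    (hg : ∫⁻ x in s, g x ∂ν < ⊤) : ∫⁻ x in s, f x ∂ν < ⊤ := by
  refine (setLIntegral_mono' hs hfg).trans_lt ?_
  rw [lintegral_const_mul' _ _ hC]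
  exact ENNReal.mul_lt_top hC.lt_top hg

lemma tendsto_setLIntegral_zero_of_le_const_mul_add {s : Set α} (hs : MeasurableSet s)
    {C : ENNReal} (hC : C ≠ ⊤) {f g h : ℕ → α → ENNReal}
    (hfgh : ∀ n, ∀ x ∈ s, f n x ≤ C * g n x + h n x)
    (hgm : ∀ n, AEMeasurable (g n) (ν.restrict s))
    (hg : Tendsto (fun n => ∫⁻ x in s, g n x ∂ν) atTop (𝓝 0))
    (hh : Tendsto (fun n => ∫⁻ x in s, h n x ∂ν) atTop (𝓝 0)) :
    Tendsto (fun n => ∫⁻ x in s, f n x ∂ν) atTop (𝓝 0) := by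
  have hsum : Tendsto (fun n => C * (∫⁻ x in s, g n x ∂ν) + ∫⁻ x in s, h n x ∂ν) atTop (𝓝 0) := by
    simpa only [mul_zero, add_zero] using (ENNReal.Tendsto.const_mul hg (Or.inr hC)).add hh
  refine tendsto_of_tendsto_of_tendsto_of_le_of_le tendsto_const_nhds hsum
    (fun n => zero_le) fun n => ?_
  dsimp only
  rw [← lintegral_const_mul' _ _ hC, ← lintegral_add_left' ((hgm n).const_mul _)]
  exact setLIntegral_mono' hs (hfgh n)

variable {U : ℕ → α → ℝ} {z : α → ℝ}

lemma exists_strictMono_ae_tendsto_of_tendsto_lintegral_enorm_sub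
    (hU : ∀ n, AEMeasurable (U n) ν) (hz : AEMeasurable z ν)
    (h : Tendsto (fun n => ∫⁻ x, ‖U n x - z x‖ₑ ∂ν) atTop (𝓝 0)) :
    ∃ ns : ℕ → ℕ, StrictMono ns ∧
      ∀ᵐ x ∂ν, Tendsto (fun k => U (ns k) x) atTop (𝓝 (z x)) := by
  refine TendstoInMeasure.exists_seq_tendsto_ae (tendstoInMeasure_of_tendsto_eLpNorm
    one_ne_zero (fun n => (hU n).aestronglyMeasurable) hz.aestronglyMeasurable ?_)
  simpa only [eLpNorm_one_eq_lintegral_enorm, Pi.sub_apply] using h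

lemma tendsto_lintegral_enorm_sub_mul {h : ℝ → ℝ} (hc : Continuous h) {C : ENNReal} (hC : C ≠ ⊤)
    (hh : ∀ s, ‖h s‖ₑ ≤ C) {g : α → ENNReal} (hg : AEMeasurable g ν) (hgfin : ∫⁻ x, g x ∂ν ≠ ⊤)
    (hU : ∀ n, AEMeasurable (U n) ν) (hz : AEMeasurable z ν)
    (hlim : ∀ᵐ x ∂ν, Tendsto (fun n => U n x) atTop (𝓝 (z x))) :
    Tendsto (fun n => ∫⁻ x, ‖h (U n x) - h (z x)‖ₑ * g x ∂ν) atTop (𝓝 0) := by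
  rw [← lintegral_zero (μ := ν)]
  refine tendsto_lintegral_of_dominated_convergence' (fun x => (C + C) * g x) (fun n => ?_)
    (fun n => ae_of_all _ fun x => ?_) ?_ ?_
  · exact ((hc.measurable.comp_aemeasurable (hU n)).sub
      (hc.measurable.comp_aemeasurable hz)).enorm.mul hg
  · exact mul_le_mul_left (enorm_sub_le.trans (add_le_add (hh _) (hh _))) _
  · rw [lintegral_const_mul' _ _ (ENNReal.add_ne_top.2 ⟨hC, hC⟩)]
    exact ENNReal.mul_ne_top (ENNReal.add_ne_top.2 ⟨hC, hC⟩) hgfin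
  · filter_upwards [hlim, ae_lt_top' hg hgfin] with x hx hgx
    have hdiff : Tendsto (fun n => ‖h (U n x) - h (z x)‖ₑ) atTop (𝓝 0) := by
      simpa only [sub_self, enorm_zero, Function.comp_apply] using
        (((hc.tendsto _).comp hx).sub_const (h (z x))).enorm
    simpa only [zero_mul] using ENNReal.Tendsto.mul_const hdiff (Or.inr hgx.ne)

end Convergence

section PointwiseBounds

variable {E : Type*} [NormedAddCommGroup E] [NormedSpace ℝ E]

lemma enorm_mul_add_enorm_smul_add_smul_le (p s : ℝ) (ξ g : E) :
    ‖p * s‖ₑ + ‖p • ξ + s • g‖ₑ ≤ (‖p‖ₑ + ‖g‖ₑ) * (‖s‖ₑ + ‖ξ‖ₑ) := by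
  have hgrad : ‖p • ξ + s • g‖ₑ ≤ ‖p‖ₑ * ‖ξ‖ₑ + ‖s‖ₑ * ‖g‖ₑ := by
    simpa only [enorm_smul] using enorm_add_le (p • ξ) (s • g)
  calc ‖p * s‖ₑ + ‖p • ξ + s • g‖ₑ
      ≤ ‖p‖ₑ * ‖s‖ₑ + (‖p‖ₑ * ‖ξ‖ₑ + ‖s‖ₑ * ‖g‖ₑ) := add_le_add (enorm_mul p s).le hgrad
    _ ≤ ‖p‖ₑ * ‖s‖ₑ + (‖p‖ₑ * ‖ξ‖ₑ + ‖s‖ₑ * ‖g‖ₑ) + ‖g‖ₑ * ‖ξ‖ₑ := le_self_add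
    _ = (‖p‖ₑ + ‖g‖ₑ) * (‖s‖ₑ + ‖ξ‖ₑ) := by ring

lemma enorm_smul_sub_smul_le (c c' : ℝ) (ξ ζ : E) :
    ‖c • ξ - c' • ζ‖ₑ ≤ ‖c‖ₑ * ‖ξ - ζ‖ₑ + ‖c - c'‖ₑ * ‖ζ‖ₑ := by
  rw [show c • ξ - c' • ζ = c • (ξ - ζ) + (c - c') • ζ by module, ← enorm_smul, ← enorm_smul]
  exact enorm_add_le _ _

end PointwiseBounds

namespace WeakOneCoercive

section WeakGradients

variable {m : ℕ} {M : Type*} [MetricSpace M] [ChartedSpace (Euc m) M]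
  {Ω Ω₀ : Set M} {U u v z : M → ℝ} {G H Z : ∀ x : M, Tan (m := m) x}

lemma mdifferentiableAt_of_contMDiffOn (hΩ₀ : IsOpen Ω₀)
    (hU : ContMDiffOn 𝓘(ℝ, Euc m) 𝓘(ℝ, ℝ) 1 U Ω₀) {x : M} (hx : x ∈ Ω₀) :
    MDifferentiableAt 𝓘(ℝ, Euc m) 𝓘(ℝ, ℝ) U x :=
  (hU.contMDiffAt (hΩ₀.mem_nhds hx)).mdifferentiableAt one_ne_zero

variable [IsManifold 𝓘(ℝ, Euc m) ∞ M]
  [RiemannianBundle (fun x : M => TangentSpace 𝓘(ℝ, Euc m) x)]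
  [SigmaCompactSpace M] [MeasurableSpace M]

lemma HasWeakGradient.mono {Ω' : Set M} (h : Ω' ⊆ Ω) (hu : HasWeakGradient Ω u G) :
    HasWeakGradient Ω' u G where
  measurable := hu.measurable.mono_measure (Measure.restrict_mono h le_rfl)
  measurable_grad := hu.measurable_grad.mono h
  approx := fun Ω₀ ho hc hsub => hu.approx Ω₀ ho hc (hsub.trans h)

variable [BorelSpace M]

lemma HasWeakGradient.congr (hΩ : IsOpen Ω) (hu : HasWeakGradient Ω u G)
    (h : ∀ x ∈ Ω, u x = v x) (h' : ∀ x ∈ Ω, G x = H x) : HasWeakGradient Ω v H where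
  measurable := hu.measurable.congr ((ae_restrict_mem hΩ.measurableSet).mono h)
  measurable_grad := hu.measurable_grad.congr ((ae_restrict_mem hΩ.measurableSet).mono h')
  approx := fun Ω₀ ho hc hsub => by
    obtain ⟨U, hU, hlim⟩ := hu.approx Ω₀ ho hc hsub
    refine ⟨U, hU, hlim.congr fun n => setLIntegral_congr_fun ho.measurableSet fun x hx => ?_⟩
    have hxΩ := hsub (subset_closure hx)
    simp only [h x hxΩ, h' x hxΩ]

variable [IsContMDiffRiemannianBundle 𝓘(ℝ, Euc m) ∞ (Euc m)
  (fun x : M => TangentSpace 𝓘(ℝ, Euc m) x)]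

lemma aemeasurable_enorm_add_enorm_riemGradient (hΩ₀ : IsOpen Ω₀)
    (hU : ContMDiffOn 𝓘(ℝ, Euc m) 𝓘(ℝ, ℝ) 1 U Ω₀) :
    AEMeasurable (fun x => ‖U x‖ₑ + ‖riemGradient (m := m) U x‖ₑ)
      ((riemVolume m M).restrict Ω₀) :=
  (hU.continuousOn.aemeasurable hΩ₀.measurableSet).enorm.add
    (measurableField_riemGradient hΩ₀ hU).enorm

lemma aemeasurable_enorm_sub_add_enorm_riemGradient_sub (hΩ₀ : IsOpen Ω₀)
    (hU : ContMDiffOn 𝓘(ℝ, Euc m) 𝓘(ℝ, ℝ) 1 U Ω₀)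
    (hu : AEMeasurable u ((riemVolume m M).restrict Ω₀)) (hG : MeasurableField Ω₀ G) :
    AEMeasurable (fun x => ‖U x - u x‖ₑ + ‖riemGradient (m := m) U x - G x‖ₑ)
      ((riemVolume m M).restrict Ω₀) :=
  ((hU.continuousOn.aemeasurable hΩ₀.measurableSet).sub hu).enorm.add
    ((measurableField_riemGradient hΩ₀ hU).sub hG).enorm

lemma HasWeakGradient.lintegral_enorm_lt_top (hu : HasWeakGradient Ω u G) (hΩ₀ : IsOpen Ω₀)
    (hc : IsCompact (closure Ω₀)) (hsub : closure Ω₀ ⊆ Ω) :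
    ∫⁻ x in Ω₀, ‖G x‖ₑ ∂(riemVolume m M) < ⊤ := by
  obtain ⟨U, hU, hlim⟩ := hu.approx Ω₀ hΩ₀ hc hsub
  obtain ⟨n, hn⟩ := (hlim.eventually_lt_const zero_lt_one).exists
  calc ∫⁻ x in Ω₀, ‖G x‖ₑ ∂(riemVolume m M)
      ≤ ∫⁻ x in Ω₀, ((‖U n x‖ₑ + ‖riemGradient (m := m) (U n) x‖ₑ) +
        (‖U n x - u x‖ₑ + ‖riemGradient (m := m) (U n) x - G x‖ₑ)) ∂(riemVolume m M) := by
        refine lintegral_mono fun x => ?_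
        have hG : ‖G x‖ₑ ≤ ‖riemGradient (m := m) (U n) x‖ₑ +
            ‖riemGradient (m := m) (U n) x - G x‖ₑ := by
          simpa only [sub_sub_cancel] using enorm_sub_le (a := riemGradient (m := m) (U n) x)
            (b := riemGradient (m := m) (U n) x - G x)
        exact hG.trans (add_le_add le_add_self le_add_self)
    _ = _ := lintegral_add_left' (aemeasurable_enorm_add_enorm_riemGradient hΩ₀ (hU n).1) _
    _ < ⊤ := ENNReal.add_lt_top.2 ⟨(hU n).2, hn.trans ENNReal.one_lt_top⟩

lemma HasWeakGradient.sub (hu : HasWeakGradient Ω u G) (hv : HasWeakGradient Ω v H) :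
    HasWeakGradient Ω (fun x => u x - v x) (fun x => G x - H x) where
  measurable := hu.measurable.sub hv.measurable
  measurable_grad := hu.measurable_grad.sub hv.measurable_grad
  approx := fun Ω₀ ho hc hsub => by
    obtain ⟨U, hU, hUlim⟩ := hu.approx Ω₀ ho hc hsub
    obtain ⟨V, hV, hVlim⟩ := hv.approx Ω₀ ho hc hsub
    have hu₀ := hu.mono (subset_closure.trans hsub)
    have hgrad : ∀ n, ∀ x ∈ Ω₀, riemGradient (m := m) (fun y => U n y - V n y) x =
        riemGradient (U n) x - riemGradient (V n) x := fun n x hx =>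
      riemGradient_sub (mdifferentiableAt_of_contMDiffOn ho (hU n).1 hx)
        (mdifferentiableAt_of_contMDiffOn ho (hV n).1 hx)
    refine ⟨fun n x => U n x - V n x, fun n => ⟨(hU n).1.sub (hV n).1, ?_⟩, ?_⟩
    · calc _ ≤ ∫⁻ x in Ω₀, ((‖U n x‖ₑ + ‖riemGradient (m := m) (U n) x‖ₑ) +
            (‖V n x‖ₑ + ‖riemGradient (m := m) (V n) x‖ₑ)) ∂(riemVolume m M) := by
            refine setLIntegral_mono' ho.measurableSet fun x hx => ?_
            rw [hgrad n x hx, add_add_add_comm]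
            exact add_le_add enorm_sub_le enorm_sub_le
        _ = _ := lintegral_add_left' (aemeasurable_enorm_add_enorm_riemGradient ho (hU n).1) _
        _ < ⊤ := ENNReal.add_lt_top.2 ⟨(hU n).2, (hV n).2⟩
    · refine tendsto_setLIntegral_zero_of_le_const_mul_add ho.measurableSet ENNReal.one_ne_top
        (fun n x hx => ?_) (fun n => aemeasurable_enorm_sub_add_enorm_riemGradient_sub ho (hU n).1
          hu₀.measurable hu₀.measurable_grad) hUlim hVlim
      rw [hgrad n x hx, one_mul, add_add_add_comm, sub_sub_sub_comm (U n x),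
        sub_sub_sub_comm (riemGradient _ _)]
      exact add_le_add enorm_sub_le enorm_sub_le

lemma HasWeakGradient.contMDiff_mul {ψ : M → ℝ} (hψ : ContMDiff 𝓘(ℝ, Euc m) 𝓘(ℝ, ℝ) 1 ψ)
    (hz : HasWeakGradient Ω z Z) :
    HasWeakGradient Ω (fun x => ψ x * z x)
      (fun x => ψ x • Z x + z x • riemGradient (m := m) ψ x) where
  measurable := hψ.continuous.measurable.aemeasurable.mul hz.measurable
  measurable_grad := (hz.measurable_grad.smul hψ.continuous.measurable.aemeasurable).add
    (((measurableField_riemGradient isOpen_univ hψ.contMDiffOn).mono (subset_univ Ω)).smul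
      hz.measurable)
  approx := fun Ω₀ ho hc hsub => by
    obtain ⟨U, hU, hlim⟩ := hz.approx Ω₀ ho hc hsub
    have hz₀ := hz.mono (subset_closure.trans hsub)
    obtain ⟨C, hC, hψC⟩ : ∃ C : ENNReal, C ≠ ⊤ ∧
        ∀ x ∈ Ω₀, ‖ψ x‖ₑ + ‖riemGradient (m := m) ψ x‖ₑ ≤ C := by
      obtain ⟨a, ha⟩ := hc.exists_bound_of_continuousOn hψ.continuous.continuousOn
      obtain ⟨d, hd⟩ := exists_norm_riemGradient_le_of_isCompact hψ hc
      refine ⟨ENNReal.ofReal a + ENNReal.ofReal d,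
        ENNReal.add_ne_top.2 ⟨ENNReal.ofReal_ne_top, ENNReal.ofReal_ne_top⟩, fun x hx => ?_⟩
      rw [← ofReal_norm (ψ x), ← ofReal_norm (riemGradient ψ x)]
      exact add_le_add (ENNReal.ofReal_le_ofReal (ha x (subset_closure hx)))
        (ENNReal.ofReal_le_ofReal (hd x (subset_closure hx)))
    have hbound : ∀ x ∈ Ω₀, ∀ (s : ℝ) (ξ : Tan (m := m) x),
        ‖ψ x * s‖ₑ + ‖ψ x • ξ + s • riemGradient (m := m) ψ x‖ₑ ≤ C * (‖s‖ₑ + ‖ξ‖ₑ) :=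
      fun x hx s ξ => (enorm_mul_add_enorm_smul_add_smul_le _ _ _ _).trans
        (mul_le_mul_left (hψC x hx) _)
    have hgrad : ∀ n, ∀ x ∈ Ω₀, riemGradient (m := m) (fun y => ψ y * U n y) x =
        ψ x • riemGradient (U n) x + U n x • riemGradient ψ x := fun n x hx =>
      riemGradient_mul (hψ.contMDiffAt.mdifferentiableAt one_ne_zero)
        (mdifferentiableAt_of_contMDiffOn ho (hU n).1 hx)
    refine ⟨fun n x => ψ x * U n x, fun n => ⟨hψ.contMDiffOn.mul (hU n).1, ?_⟩, ?_⟩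
    · refine setLIntegral_lt_top_of_le_const_mul ho.measurableSet hC (fun x hx => ?_) (hU n).2
      simpa only [hgrad n x hx] using hbound x hx _ _
    · refine tendsto_setLIntegral_zero_of_le_const_mul_add ho.measurableSet hC (h := fun _ _ => 0)
        (fun n x hx => ?_) (fun n => aemeasurable_enorm_sub_add_enorm_riemGradient_sub ho (hU n).1
          hz₀.measurable hz₀.measurable_grad) hlim (by simp)
      rw [hgrad n x hx, ← mul_sub, add_sub_add_comm, ← smul_sub, ← sub_smul, add_zero]
      exact hbound x hx _ _

lemma HasWeakGradient.comp {Λ : ℝ → ℝ} {l : NNReal} (hΛ : ContDiff ℝ 1 Λ)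
    (hl : LipschitzWith l Λ) (hΛ0 : Λ 0 = 0) (hz : HasWeakGradient Ω z Z) :
    HasWeakGradient Ω (fun x => Λ (z x)) (fun x => deriv Λ (z x) • Z x) where
  measurable := hΛ.continuous.measurable.comp_aemeasurable hz.measurable
  measurable_grad := hz.measurable_grad.smul
    ((hΛ.continuous_deriv le_rfl).measurable.comp_aemeasurable hz.measurable)
  approx := fun Ω₀ ho hc hsub => by
    obtain ⟨U, hU, hlim⟩ := hz.approx Ω₀ ho hc hsub
    have hz₀ := hz.mono (subset_closure.trans hsub)
    have hUm : ∀ n, AEMeasurable (U n) ((riemVolume m M).restrict Ω₀) := fun n =>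
      (hU n).1.continuousOn.aemeasurable ho.measurableSet
    obtain ⟨ns, hns, hae⟩ := exists_strictMono_ae_tendsto_of_tendsto_lintegral_enorm_sub hUm
      hz₀.measurable (tendsto_of_tendsto_of_tendsto_of_le_of_le tendsto_const_nhds hlim
        (fun n => zero_le) fun n => lintegral_mono fun x => le_self_add)
    have hΛ' : ∀ s, ‖deriv Λ s‖ₑ ≤ l := fun s =>
      enorm_le_coe.2 (NNReal.coe_le_coe.1 (norm_deriv_le_of_lipschitz hl))
    have hΛsub : ∀ s t, ‖Λ s - Λ t‖ₑ ≤ l * ‖s - t‖ₑ := fun s t => by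
      simpa only [edist_eq_enorm_sub] using hl s t
    have hgrad : ∀ n, ∀ x ∈ Ω₀, riemGradient (m := m) (fun y => Λ (U n y)) x =
        deriv Λ (U n x) • riemGradient (U n) x := fun n x hx =>
      riemGradient_comp (mdifferentiableAt_of_contMDiffOn ho (hU n).1 hx)
        (hΛ.differentiable one_ne_zero _).hasDerivAt
    refine ⟨fun k x => Λ (U (ns k) x),
      fun k => ⟨hΛ.contMDiff.comp_contMDiffOn (hU (ns k)).1, ?_⟩, ?_⟩
    · refine setLIntegral_lt_top_of_le_const_mul ho.measurableSet (ENNReal.coe_ne_top (r := l))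
        (fun x hx => ?_) (hU (ns k)).2
      rw [hgrad _ x hx, enorm_smul, mul_add]
      exact add_le_add (by simpa only [hΛ0, sub_zero] using hΛsub (U (ns k) x) 0)
        (mul_le_mul_left (hΛ' _) _)
    · refine tendsto_setLIntegral_zero_of_le_const_mul_add ho.measurableSet
        (ENNReal.coe_ne_top (r := l)) (fun k x hx => ?_)
        (fun k => aemeasurable_enorm_sub_add_enorm_riemGradient_sub ho
          (hU (ns k)).1 hz₀.measurable hz₀.measurable_grad) (hlim.comp hns.tendsto_atTop)
        (tendsto_lintegral_enorm_sub_mul (hΛ.continuous_deriv le_rfl) ENNReal.coe_ne_top hΛ'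
          hz₀.measurable_grad.enorm (hz.lintegral_enorm_lt_top ho hc hsub).ne
          (fun k => hUm (ns k)) hz₀.measurable hae)
      rw [hgrad _ x hx, mul_add, add_assoc]
      exact add_le_add (hΛsub _ _) ((enorm_smul_sub_smul_le _ _ _ _).trans
        (add_le_add_left (mul_le_mul_left (hΛ' _) _) _))

end WeakGradients

end WeakOneCoercive

section SmoothTransition

lemma deriv_smoothTransition_of_nonpos {s : ℝ} (hs : s ≤ 0) :
    deriv Real.smoothTransition s = 0 := by
  refine IsLocalMin.deriv_eq_zero (Eventually.of_forall fun t => ?_)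
  rw [Real.smoothTransition.zero_of_nonpos hs]
  exact Real.smoothTransition.nonneg t

lemma deriv_smoothTransition_of_one_le {s : ℝ} (hs : 1 ≤ s) :
    deriv Real.smoothTransition s = 0 := by
  refine IsLocalMax.deriv_eq_zero (Eventually.of_forall fun t => ?_)
  rw [Real.smoothTransition.one_of_one_le hs]
  exact Real.smoothTransition.le_one t

lemma exists_lipschitzWith_smoothTransition :
    ∃ l : NNReal, LipschitzWith l Real.smoothTransition := by
  have hsupp : HasCompactSupport (deriv Real.smoothTransition) :=
    HasCompactSupport.intro (isCompact_Icc (a := 0) (b := 1)) fun s hs => by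
      rcases not_and_or.1 hs with h | h
      · exact deriv_smoothTransition_of_nonpos (not_le.1 h).le
      · exact deriv_smoothTransition_of_one_le (not_le.1 h).le
  obtain ⟨C, hC⟩ := ((Real.smoothTransition.contDiff (n := 1)).continuous_deriv
    le_rfl).bounded_above_of_compact_support hsupp
  exact ⟨C.toNNReal, lipschitzWith_of_nnnorm_deriv_le
    ((Real.smoothTransition.contDiff (n := 1)).differentiable one_ne_zero) fun s =>
      NNReal.le_toNNReal_of_coe_le (hC s)⟩

end SmoothTransition

lemma monotone_of_forall_mul_sub_le {f : ℝ → ℝ} {α : ℝ} (hα : 0 ≤ α)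
    (hf : ∀ s t : ℝ, t < s → α * (s - t) ≤ f s - f t) : Monotone f :=
  monotone_iff_forall_lt.2 fun t s hts =>
    sub_nonneg.1 ((mul_nonneg hα (sub_pos.2 hts).le).trans (hf s t hts))

lemma neg_mul_norm_le_inner_smul_add_smul {E : Type*} [NormedAddCommGroup E]
    [InnerProductSpace ℝ E] {X ζ g : E} {K c s : ℝ} (hXζ : 0 ≤ inner ℝ X ζ) (hX : ‖X‖ ≤ K)
    (hc : 0 ≤ c) (hs : 0 ≤ s) : -(s * (K * ‖g‖)) ≤ inner ℝ X (c • ζ + s • g) := by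
  have hXg : -(K * ‖g‖) ≤ inner ℝ X g := neg_le_of_abs_le
    ((abs_real_inner_le_norm X g).trans (mul_le_mul_of_nonneg_right hX (norm_nonneg g)))
  rw [inner_add_right, real_inner_smul_right, real_inner_smul_right, ← mul_neg]
  exact (mul_le_mul_of_nonneg_left hXg hs).trans (le_add_of_nonneg_left (mul_nonneg hc hXζ))

section SuperlevelSets

variable {X : Type*} [TopologicalSpace X] {Ω : Set X} {z ψ : X → ℝ} {γ : ℝ}

lemma superlevel_subset_of_lt_on_frontier (hΩ : IsOpen Ω) (hγ : ∀ y ∈ frontier Ω, z y < γ) :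
    {x ∈ closure Ω | γ ≤ z x} ⊆ Ω := fun x hx =>
  by_contra fun hxΩ => (hγ x (hΩ.frontier_eq ▸ ⟨hx.1, hxΩ⟩)).not_ge hx.2

lemma exists_isCompact_superlevel (hΩ : IsOpen Ω) (hz : ContinuousOn z (closure Ω))
    (hγ : ∀ y ∈ frontier Ω, z y < γ) (hψ : HasCompactSupport ψ) :
    ∃ K, IsCompact K ∧ K ⊆ tsupport ψ ∩ Ω ∧ ∀ x ∈ Ω, x ∉ K → z x ≤ γ ∨ x ∉ tsupport ψ := by
  refine ⟨{x ∈ closure Ω | γ ≤ z x} ∩ tsupport ψ,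
    hψ.isCompact.inter_left (hz.preimage_isClosed_of_isClosed isClosed_closure isClosed_Ici),
    fun x hx => ⟨hx.2, superlevel_subset_of_lt_on_frontier hΩ hγ hx.1⟩, fun x hx hxK => ?_⟩
  by_contra! h
  exact hxK ⟨⟨subset_closure hx, h.1.le⟩, h.2⟩

lemma integrableOn_mul_comp_monotone [T2Space X] [MeasurableSpace X] [BorelSpace X]
    {ν : Measure X} {K : Set X} {w u : X → ℝ} {f : ℝ → ℝ} (hK : IsCompact K)
    (hw : IntegrableOn w K ν) (hf : Monotone f) (hu : ContinuousOn u K) :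
    IntegrableOn (fun x => w x * f (u x)) K ν := by
  obtain ⟨C, hC⟩ := hK.exists_bound_of_continuousOn hu
  refine Integrable.mul_bdd (c := max |f C| |f (-C)|) hw
    (hf.measurable.comp_aemeasurable (hu.aemeasurable hK.measurableSet)).aestronglyMeasurable ?_
  filter_upwards [ae_restrict_mem hK.measurableSet] with x hx
  have hux := abs_le.1 (hC x hx)
  rw [max_comm]
  exact abs_le_max_abs_abs (hf hux.1) (hf hux.2)

end SuperlevelSets

namespace WeakOneCoercive

section TestFunctions

/-- The function `ψ Λ(z - γ)` on `Ω`, extended by zero, where `Λ` is `Real.smoothTransition`. For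
`z = u - v` it is the test function of the comparison argument, supported where `z ≥ γ`. -/
noncomputable def levelTest {X : Type*} (Ω : Set X) (γ : ℝ) (ψ z : X → ℝ) : X → ℝ :=
  Ω.indicator fun x => ψ x * Real.smoothTransition (z x - γ)

lemma levelTest_of_mem {X : Type*} {Ω : Set X} {z ψ : X → ℝ} {γ : ℝ} {x : X} (hx : x ∈ Ω) :
    levelTest Ω γ ψ z x = ψ x * Real.smoothTransition (z x - γ) :=
  indicator_of_mem hx _

lemma levelTest_eq_zero {X : Type*} [TopologicalSpace X] {Ω : Set X} {z ψ : X → ℝ} {γ : ℝ} {x : X}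
    (h : z x ≤ γ ∨ x ∉ tsupport ψ) : levelTest Ω γ ψ z x = 0 := by
  refine indicator_apply_eq_zero.2 fun _ => ?_
  rcases h with h | h
  · rw [Real.smoothTransition.zero_of_nonpos (sub_nonpos.2 h), mul_zero]
  · rw [image_eq_zero_of_notMem_tsupport h, zero_mul]

variable {m : ℕ} {M : Type*} [MetricSpace M] [ChartedSpace (Euc m) M]
  [RiemannianBundle (fun x : M => TangentSpace 𝓘(ℝ, Euc m) x)]
  {Ω K : Set M} {z ψ w φ : M → ℝ} {X Z Φ : ∀ x : M, Tan (m := m) x} {γ k : ℝ}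

lemma riemGradient_of_notMem_tsupport {x : M} (hx : x ∉ tsupport ψ) :
    riemGradient (m := m) ψ x = 0 := by
  rw [riemGradient_congr (notMem_tsupport_iff_eventuallyEq.1 hx)]
  exact riemGradient_const 0

/-- The weak gradient on `Ω` of `levelTest Ω γ ψ z`, where `Z` is the weak gradient of `z`. -/
noncomputable def levelTestGradient (γ : ℝ) (ψ z : M → ℝ) (Z : ∀ x : M, Tan (m := m) x) (x : M) :
    Tan (m := m) x :=
  (ψ x * deriv Real.smoothTransition (z x - γ)) • Z x +
    Real.smoothTransition (z x - γ) • riemGradient ψ x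

lemma levelTestGradient_eq_zero {x : M} (h : z x ≤ γ ∨ x ∉ tsupport ψ) :
    levelTestGradient γ ψ z Z x = 0 := by
  rcases h with h | h
  · rw [levelTestGradient, Real.smoothTransition.zero_of_nonpos (sub_nonpos.2 h),
      deriv_smoothTransition_of_nonpos (sub_nonpos.2 h), mul_zero, zero_smul, zero_smul, add_zero]
  · rw [levelTestGradient, image_eq_zero_of_notMem_tsupport h, riemGradient_of_notMem_tsupport h,
      zero_mul, zero_smul, smul_zero, add_zero]

variable [IsManifold 𝓘(ℝ, Euc m) ∞ M]
  [IsContMDiffRiemannianBundle 𝓘(ℝ, Euc m) ∞ (Euc m)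
      (fun x : M => TangentSpace 𝓘(ℝ, Euc m) x)]
  [SigmaCompactSpace M] [MeasurableSpace M] [BorelSpace M]

lemma hasWeakGradient_levelTest (hΩ : IsOpen Ω) (hz : HasWeakGradient Ω z Z) (hγ : 0 ≤ γ)
    (hψ : ContMDiff 𝓘(ℝ, Euc m) 𝓘(ℝ, ℝ) 1 ψ) :
    HasWeakGradient Ω (levelTest Ω γ ψ z) (levelTestGradient γ ψ z Z) := by
  obtain ⟨l, hl⟩ := exists_lipschitzWith_smoothTransition
  have hΛ : ContDiff ℝ 1 fun s => Real.smoothTransition (s - γ) :=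
    Real.smoothTransition.contDiff.comp (contDiff_id.sub contDiff_const)
  have hΛl : LipschitzWith l fun s => Real.smoothTransition (s - γ) := fun s t => by
    simpa only [edist_sub_right] using hl (s - γ) (t - γ)
  have hΛ0 : Real.smoothTransition (0 - γ) = 0 :=
    Real.smoothTransition.zero_of_nonpos (sub_nonpos.2 hγ)
  refine ((hz.comp hΛ hΛl hΛ0).contMDiff_mul hψ).congr hΩ
    (fun x hx => (levelTest_of_mem hx).symm) fun x _ => ?_
  rw [levelTestGradient, deriv_comp_sub_const, smul_smul]

lemma HasWeakGradient.isTestFunction_levelTest (hΩ : IsOpen Ω) (hz : HasWeakGradient Ω z Z)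
    (hγ : 0 ≤ γ) (hψ : ContMDiff 𝓘(ℝ, Euc m) 𝓘(ℝ, ℝ) 1 ψ) (hψ0 : ∀ x, 0 ≤ ψ x)
    (hK : IsCompact K) (hKΩ : K ⊆ Ω) (hoff : ∀ x ∈ Ω, x ∉ K → z x ≤ γ ∨ x ∉ tsupport ψ) :
    IsTestFunction Ω (levelTest Ω γ ψ z) (levelTestGradient γ ψ z Z) where
  weakGradient := hasWeakGradient_levelTest hΩ hz hγ hψ
  compactSupport := ⟨K, hK, hKΩ, fun x hxK => (em (x ∈ Ω)).elim
    (fun hx => levelTest_eq_zero (hoff x hx hxK)) fun hx => indicator_of_notMem hx _⟩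
  nonneg := indicator_nonneg fun x _ => mul_nonneg (hψ0 x) (Real.smoothTransition.nonneg _)

lemma HasWeakGradient.integrableOn_norm (hφ : HasWeakGradient Ω φ Φ) (hΩ : IsOpen Ω)
    (hK : IsCompact K) (hKΩ : K ⊆ Ω) : IntegrableOn (fun x => ‖Φ x‖) K (riemVolume m M) := by
  have : LocallyCompactSpace M := ChartedSpace.locallyCompactSpace (Euc m) M
  obtain ⟨Ω₀, ho, hKo, hcl, hc⟩ := exists_open_between_and_isCompact_closure hK hΩ hKΩ
  refine IntegrableOn.mono_set ⟨(hφ.measurable_grad.mono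
    (subset_closure.trans hcl)).norm.aestronglyMeasurable, ?_⟩ hKo
  simpa only [HasFiniteIntegral, enorm_norm] using hφ.lintegral_enorm_lt_top ho hc hcl

lemma HasWeakGradient.integrableOn_weight_mul_inner (hφ : HasWeakGradient Ω φ Φ) (hΩ : IsOpen Ω)
    (hw : IsWeight m Ω w) (hX : MeasurableField Ω X) (hXk : ∀ x ∈ Ω, ‖X x‖ ≤ k)
    (hK : IsCompact K) (hKΩ : K ⊆ Ω) (hΦ : ∀ x ∈ Ω, x ∉ K → Φ x = 0) :
    IntegrableOn (fun x => w x * inner ℝ (X x) (Φ x)) Ω (riemVolume m M) := by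
  obtain ⟨C, hC⟩ := hw.locallyBounded K hK hKΩ
  have hrestrict := Measure.restrict_mono (μ := riemVolume m M) hKΩ le_rfl
  have hinner : IntegrableOn (fun x => inner ℝ (X x) (Φ x)) K (riemVolume m M) := by
    refine ((hφ.integrableOn_norm hΩ hK hKΩ).const_mul k).mono'
      ((hX.inner hφ.measurable_grad).mono_measure hrestrict).aestronglyMeasurable ?_
    filter_upwards [ae_restrict_mem hK.measurableSet] with x hx
    exact (norm_inner_le_norm _ _).trans
      (mul_le_mul_of_nonneg_right (hXk x (hKΩ hx)) (norm_nonneg _))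
  refine IntegrableOn.of_forall_sdiff_eq_zero (s := K)
    (hinner.bdd_mul (hw.measurable.mono_measure hrestrict).aestronglyMeasurable hC)
    hΩ.measurableSet fun x hx => ?_
  rw [hΦ x hx.1 hx.2, inner_zero_right, mul_zero]

end TestFunctions

section Energy

variable {m : ℕ} {M : Type*} [MetricSpace M] [ChartedSpace (Euc m) M]
  [RiemannianBundle (fun x : M => TangentSpace 𝓘(ℝ, Euc m) x)]
  {Ω K : Set M} {A : ∀ x : M, ℝ → Tan (m := m) x → Tan (m := m) x} {w b u v z ψ : M → ℝ}
  {Du Dv : ∀ x : M, Tan (m := m) x} {f : ℝ → ℝ} {α γ k : ℝ}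

/-- The integrand `w Λ(z - γ) (α γ b ψ - 2 k |∇ψ|)` of the energy inequality, where `Λ` is
`Real.smoothTransition`. -/
noncomputable def energyDensity (m : ℕ) {M : Type*} [MetricSpace M] [ChartedSpace (Euc m) M]
    [RiemannianBundle (fun x : M => TangentSpace 𝓘(ℝ, Euc m) x)] (α γ k : ℝ) (w b z ψ : M → ℝ)
    (x : M) : ℝ :=
  w x * (Real.smoothTransition (z x - γ) *
    (α * γ * b x * ψ x - 2 * k * ‖riemGradient (m := m) ψ x‖))

lemma energyDensity_eq_zero {x : M} (h : z x ≤ γ ∨ x ∉ tsupport ψ) :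
    energyDensity m α γ k w b z ψ x = 0 := by
  rcases h with h | h
  · rw [energyDensity, Real.smoothTransition.zero_of_nonpos (sub_nonpos.2 h), zero_mul, mul_zero]
  · rw [energyDensity, image_eq_zero_of_notMem_tsupport h, riemGradient_of_notMem_tsupport h,
      norm_zero, mul_zero, mul_zero, sub_zero, mul_zero, mul_zero]

lemma energyDensity_le {x : M} (hw : 0 ≤ w x) (hb : 0 ≤ b x) (hψ : 0 ≤ ψ x)
    (hAk : ∀ s ξ, ‖A x s ξ‖ ≤ k)
    (hA : ∀ s t ξ η, s ≤ t → 0 ≤ inner ℝ (A x t ξ - A x s η) (ξ - η))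
    (hα : 0 ≤ α) (hf : ∀ s t : ℝ, t < s → α * (s - t) ≤ f s - f t) (hγ : 0 ≤ γ) :
    energyDensity m α γ k w b (fun x => u x - v x) ψ x ≤
      w x * ((b x * f (u x) - b x * f (v x)) *
          (ψ x * Real.smoothTransition (u x - v x - γ)) +
        inner ℝ (A x (u x) (Du x) - A x (v x) (Dv x))
          (levelTestGradient γ ψ (fun x => u x - v x) (fun x => Du x - Dv x) x)) := by
  set Λ := Real.smoothTransition (u x - v x - γ) with hΛ
  refine mul_le_mul_of_nonneg_left ?_ hw
  rcases le_or_gt (u x - v x) γ with hz | hz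
  · rw [levelTestGradient_eq_zero (m := m) (z := fun x => u x - v x) (Or.inl hz), hΛ,
      Real.smoothTransition.zero_of_nonpos (sub_nonpos.2 hz)]
    simp only [zero_mul, mul_zero, inner_zero_right, add_zero, le_refl]
  have hvu : v x < u x := sub_pos.1 (hγ.trans_lt hz)
  have hflux : -(Λ * ((k + k) * ‖riemGradient (m := m) ψ x‖)) ≤
      inner ℝ (A x (u x) (Du x) - A x (v x) (Dv x))
        (levelTestGradient (m := m) γ ψ (fun x => u x - v x) (fun x => Du x - Dv x) x) :=
    neg_mul_norm_le_inner_smul_add_smul (hA _ _ _ _ hvu.le)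
      (norm_sub_le_of_le (hAk _ _) (hAk _ _))
      (mul_nonneg hψ Real.smoothTransition.monotone.deriv_nonneg)
      (Real.smoothTransition.nonneg _)
  have hfγ : α * γ ≤ f (u x) - f (v x) :=
    (mul_le_mul_of_nonneg_left hz.le hα).trans (hf _ _ hvu)
  have hsource : α * γ * (b x * (ψ x * Λ)) ≤ (f (u x) - f (v x)) * (b x * (ψ x * Λ)) :=
    mul_le_mul_of_nonneg_right hfγ
      (mul_nonneg hb (mul_nonneg hψ (Real.smoothTransition.nonneg _)))
  linarith

/-- The energy inequality `∫_Ω w Λ(z - γ) (α γ b ψ - 2 k |∇ψ|) ≤ 0` for all `C¹` functions `ψ ≥ 0`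
of compact support for which `w` is integrable on `Ω ∩ supp ψ`. -/
def EnergyInequality (m : ℕ) {M : Type*} [MetricSpace M] [ChartedSpace (Euc m) M]
    [IsManifold 𝓘(ℝ, Euc m) ∞ M] [RiemannianBundle (fun x : M => TangentSpace 𝓘(ℝ, Euc m) x)]
    [SigmaCompactSpace M] [MeasurableSpace M] (Ω : Set M) (α γ k : ℝ) (w b z : M → ℝ) : Prop :=
  ∀ ψ : M → ℝ, ContMDiff 𝓘(ℝ, Euc m) 𝓘(ℝ, ℝ) 1 ψ → (∀ x, 0 ≤ ψ x) → HasCompactSupport ψ →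
    IntegrableOn w (tsupport ψ ∩ Ω) (riemVolume m M) →
      IntegrableOn (energyDensity m α γ k w b z ψ) Ω (riemVolume m M) ∧
        ∫ x in Ω, energyDensity m α γ k w b z ψ x ∂(riemVolume m M) ≤ 0

variable [IsManifold 𝓘(ℝ, Euc m) ∞ M] [SigmaCompactSpace M] [MeasurableSpace M]

lemma setIntegral_sub_add_inner_le_zero {h₁ h₂ φ : M → ℝ} {Φ : ∀ x : M, Tan (m := m) x}
    (hu : WeakGE Ω w A u Du h₁) (hv : WeakLE Ω w A v Dv h₂) (hφ : IsTestFunction Ω φ Φ)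
    (hi₁ : IntegrableOn (fun x => w x * h₁ x * φ x) Ω (riemVolume m M))
    (hi₂ : IntegrableOn (fun x => w x * h₂ x * φ x) Ω (riemVolume m M))
    (hiu : IntegrableOn (fun x => w x * inner ℝ (A x (u x) (Du x)) (Φ x)) Ω (riemVolume m M))
    (hiv : IntegrableOn (fun x => w x * inner ℝ (A x (v x) (Dv x)) (Φ x)) Ω (riemVolume m M)) :
    IntegrableOn (fun x => w x * ((h₁ x - h₂ x) * φ x +
        inner ℝ (A x (u x) (Du x) - A x (v x) (Dv x)) (Φ x))) Ω (riemVolume m M) ∧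
      ∫ x in Ω, w x * ((h₁ x - h₂ x) * φ x +
        inner ℝ (A x (u x) (Du x) - A x (v x) (Dv x)) (Φ x)) ∂(riemVolume m M) ≤ 0 := by
  have hsum : ∀ x, w x * ((h₁ x - h₂ x) * φ x +
      inner ℝ (A x (u x) (Du x) - A x (v x) (Dv x)) (Φ x)) =
      (w x * h₁ x * φ x - w x * h₂ x * φ x) + (w x * inner ℝ (A x (u x) (Du x)) (Φ x) -
        w x * inner ℝ (A x (v x) (Dv x)) (Φ x)) := fun x => by
    rw [inner_sub_left]
    ring
  simp only [hsum]
  refine ⟨(hi₁.sub hi₂).add (hiu.sub hiv), ?_⟩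
  rw [integral_add (hi₁.sub' hi₂) (hiu.sub' hiv), integral_sub hi₁ hi₂, integral_sub hiu hiv]
  linarith [hu φ Φ hφ, hv φ Φ hφ]

variable [BorelSpace M]

lemma integrableOn_source_mul_levelTest (hΩ : IsOpen Ω) (hb : ContinuousOn b K)
    (hu : ContinuousOn u K) (hz : ContinuousOn z K) (hf : Monotone f) (hψ : Continuous ψ)
    (hK : IsCompact K) (hKΩ : K ⊆ Ω) (hoff : ∀ x ∈ Ω, x ∉ K → z x ≤ γ ∨ x ∉ tsupport ψ)
    (hw : IntegrableOn w K (riemVolume m M)) :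
    IntegrableOn (fun x => w x * (b x * f (u x)) * levelTest Ω γ ψ z x) Ω (riemVolume m M) := by
  have hΛ : ContinuousOn (fun x => Real.smoothTransition (z x - γ)) K :=
    Real.smoothTransition.continuous.comp_continuousOn (hz.sub continuousOn_const)
  refine IntegrableOn.of_forall_sdiff_eq_zero (s := K) ?_ hΩ.measurableSet fun x hx => by
    rw [levelTest_eq_zero (hoff x hx.1 hx.2), mul_zero]
  refine ((integrableOn_mul_comp_monotone hK (hw.mul_continuousOn hb hK) hf hu).mul_continuousOn
    (hψ.continuousOn.mul hΛ) hK).congr_fun (fun x hx => ?_) hK.measurableSet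
  simp only [levelTest_of_mem (hKΩ hx), Pi.mul_apply, mul_assoc]

variable [IsContMDiffRiemannianBundle 𝓘(ℝ, Euc m) ∞ (Euc m)
      (fun x : M => TangentSpace 𝓘(ℝ, Euc m) x)]

lemma integrableOn_energyDensity (hΩ : IsOpen Ω) (hb : ContinuousOn b K) (hz : ContinuousOn z K)
    (hψ : ContMDiff 𝓘(ℝ, Euc m) 𝓘(ℝ, ℝ) 1 ψ) (hK : IsCompact K)
    (hoff : ∀ x ∈ Ω, x ∉ K → z x ≤ γ ∨ x ∉ tsupport ψ)
    (hw : IntegrableOn w K (riemVolume m M)) :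
    IntegrableOn (energyDensity m α γ k w b z ψ) Ω (riemVolume m M) := by
  have hΛ : ContinuousOn (fun x => Real.smoothTransition (z x - γ)) K :=
    Real.smoothTransition.continuous.comp_continuousOn (hz.sub continuousOn_const)
  obtain ⟨C, hC⟩ := exists_norm_riemGradient_le_of_isCompact hψ hK
  have hgrad : IntegrableOn (fun x => w x * ‖riemGradient (m := m) ψ x‖) K (riemVolume m M) := by
    refine Integrable.mul_bdd (c := C) hw (((measurableField_riemGradient isOpen_univ
      hψ.contMDiffOn).mono (subset_univ K)).norm.aestronglyMeasurable) ?_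
    filter_upwards [ae_restrict_mem hK.measurableSet] with x hx
    rw [norm_norm]
    exact hC x hx
  have hsource : IntegrableOn (fun x => w x * (b x * ψ x)) K (riemVolume m M) :=
    hw.mul_continuousOn (hb.mul hψ.continuous.continuousOn) hK
  refine IntegrableOn.of_forall_sdiff_eq_zero (s := K) ?_ hΩ.measurableSet
    fun x hx => energyDensity_eq_zero (hoff x hx.1 hx.2)
  refine (IntegrableOn.mul_continuousOn ((hsource.const_mul (α * γ)).sub (hgrad.const_mul (2 * k)))
    hΛ hK).congr_fun (fun x _ => ?_) hK.measurableSet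
  simp only [energyDensity, Pi.sub_apply]
  ring

theorem energyInequality_sub (hΩ : IsOpen Ω) (hA : IsCaratheodory Ω A)
    (hAk : ∀ x ∈ Ω, ∀ s ξ, ‖A x s ξ‖ ≤ k)
    (hAmono : ∀ x ∈ Ω, ∀ s t ξ η, s ≤ t → 0 ≤ inner ℝ (A x t ξ - A x s η) (ξ - η))
    (hw : IsWeight m Ω w) (hb : Continuous b) (hb0 : ∀ x, 0 ≤ b x) (hα : 0 ≤ α)
    (hf : ∀ s t : ℝ, t < s → α * (s - t) ≤ f s - f t)
    (hu : HasWeakGradient Ω u Du) (huc : ContinuousOn u (closure Ω))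
    (hv : HasWeakGradient Ω v Dv) (hvc : ContinuousOn v (closure Ω))
    (hLu : WeakGE Ω w A u Du (fun x => b x * f (u x)))
    (hLv : WeakLE Ω w A v Dv (fun x => b x * f (v x)))
    (hγ : 0 ≤ γ) (hγfr : ∀ y ∈ frontier Ω, u y - v y < γ) :
    EnergyInequality m Ω α γ k w b (fun x => u x - v x) := by
  intro ψ hψ hψ0 hψc hwψ
  obtain ⟨K, hK, hKψ, hoff⟩ := exists_isCompact_superlevel hΩ (huc.sub hvc) hγfr hψc
  have hKΩ : K ⊆ Ω := fun x hx => (hKψ hx).2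
  have huK := huc.mono (hKΩ.trans subset_closure)
  have hvK := hvc.mono (hKΩ.trans subset_closure)
  have hwK := hwψ.mono_set hKψ
  have hfm := monotone_of_forall_mul_sub_le hα hf
  have htest := (hu.sub hv).isTestFunction_levelTest hΩ hγ hψ hψ0 hK hKΩ hoff
  have hsource {y : M → ℝ} (hy : ContinuousOn y K) := integrableOn_source_mul_levelTest hΩ
    hb.continuousOn hy (huK.sub hvK) hfm hψ.continuous hK hKΩ hoff hwK
  have hflux {y : M → ℝ} {Dy : ∀ x : M, Tan (m := m) x} (hy : HasWeakGradient Ω y Dy) :=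
    htest.weakGradient.integrableOn_weight_mul_inner hΩ hw
      (hA.measurableField_comp hy.measurable hy.measurable_grad) (fun x hx => hAk x hx _ _) hK hKΩ
      fun x hx hxK => levelTestGradient_eq_zero (hoff x hx hxK)
  obtain ⟨hi, hle⟩ := setIntegral_sub_add_inner_le_zero hLu hLv htest (hsource huK) (hsource hvK)
    (hflux hu) (hflux hv)
  have hE : IntegrableOn (energyDensity m α γ k w b (fun x => u x - v x) ψ) Ω (riemVolume m M) :=
    integrableOn_energyDensity hΩ hb.continuousOn (huK.sub hvK) hψ hK hoff hwK
  refine ⟨hE, (integral_mono_ae hE hi ?_).trans hle⟩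
  filter_upwards [ae_restrict_mem hΩ.measurableSet, hw.pos] with x hx hwx
  rw [levelTest_of_mem hx]
  exact energyDensity_le hwx.le (hb0 x) (hψ0 x) (hAk x hx) (hAmono x hx) hα hf hγ

end Energy

end WeakOneCoercive

section RadialCutoff

/-- A primitive of `t ↦ t ^ (-μ)` on the positive half-line. -/
noncomputable def growthProfile (μ t : ℝ) : ℝ :=
  if μ = 1 then Real.log t else t ^ (1 - μ) / (1 - μ)

lemma growthProfile_one : growthProfile 1 = Real.log :=
  funext fun _ => if_pos rfl

variable {μ θ R R₁ s t : ℝ} {l : NNReal}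

lemma growthProfile_of_ne_one (hμ : μ ≠ 1) : growthProfile μ = fun t => t ^ (1 - μ) / (1 - μ) :=
  funext fun _ => if_neg hμ

lemma hasDerivAt_growthProfile (ht : 0 < t) : HasDerivAt (growthProfile μ) (t ^ (-μ)) t := by
  rcases eq_or_ne μ 1 with rfl | hμ
  · rw [growthProfile_one, Real.rpow_neg_one]
    exact Real.hasDerivAt_log ht.ne'
  · rw [growthProfile_of_ne_one hμ]
    refine ((Real.hasDerivAt_rpow_const (Or.inl ht.ne')).div_const (1 - μ)).congr_deriv ?_
    rw [mul_div_cancel_left₀ _ (sub_ne_zero.2 hμ.symm), sub_sub_cancel_left]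

lemma contDiffAt_growthProfile (ht : 0 < t) : ContDiffAt ℝ 1 (growthProfile μ) t := by
  rcases eq_or_ne μ 1 with rfl | hμ
  · rw [growthProfile_one]
    exact Real.contDiffAt_log.2 ht.ne'
  · rw [growthProfile_of_ne_one hμ]
    exact (Real.contDiffAt_rpow_const_of_ne ht.ne').div_const _

lemma monotoneOn_growthProfile : MonotoneOn (growthProfile μ) (Ioi 0) :=
  monotoneOn_of_hasDerivWithinAt_nonneg (convex_Ioi 0)
    (fun _ hx => (hasDerivAt_growthProfile hx).continuousAt.continuousWithinAt)
    (fun _ hx => (hasDerivAt_growthProfile (interior_subset hx)).hasDerivWithinAt)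
    fun _ hx => Real.rpow_nonneg (le_of_lt (interior_subset hx)) _

lemma tendsto_growthProfile_atTop (hμ : μ ≤ 1) : Tendsto (growthProfile μ) atTop atTop := by
  rcases hμ.eq_or_lt with rfl | hμ
  · rw [growthProfile_one]
    exact Real.tendsto_log_atTop
  · rw [growthProfile_of_ne_one hμ.ne]
    exact (tendsto_rpow_atTop (sub_pos.2 hμ)).atTop_div_const (sub_pos.2 hμ)

/-- The radial cut-off function `e^{-θ g(t)} χ(R + 1 - t)`, where `g' = t ^ (-μ)` and `χ` is
`Real.smoothTransition`. -/
noncomputable def radialCutoff (μ θ R t : ℝ) : ℝ :=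
  Real.exp (-θ * growthProfile μ t) * Real.smoothTransition (R + 1 - t)

lemma contDiffAt_radialCutoff (ht : 0 < t) : ContDiffAt ℝ 1 (radialCutoff μ θ R) t :=
  (contDiffAt_const.mul (contDiffAt_growthProfile ht)).exp.mul
    (Real.smoothTransition.contDiff.comp (contDiff_const.sub contDiff_id)).contDiffAt

lemma radialCutoff_nonneg : 0 ≤ radialCutoff μ θ R t :=
  mul_nonneg (Real.exp_pos _).le (Real.smoothTransition.nonneg _)

lemma radialCutoff_eq_zero (ht : R + 1 ≤ t) : radialCutoff μ θ R t = 0 := by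
  rw [radialCutoff, Real.smoothTransition.zero_of_nonpos (sub_nonpos.2 ht), mul_zero]

lemma rpow_neg_mul_exp_le_rpow_neg_mul_radialCutoff (hμ : 0 ≤ μ) (hθ : 0 ≤ θ) (ht : 0 < t)
    (htR₁ : t ≤ R₁) (hR : R₁ ≤ R) :
    R₁ ^ (-μ) * Real.exp (-θ * growthProfile μ R₁) ≤ t ^ (-μ) * radialCutoff μ θ R t := by
  have hprofile := monotoneOn_growthProfile (μ := μ) ht (ht.trans_le htR₁) htR₁
  rw [radialCutoff, Real.smoothTransition.one_of_one_le (by linarith), mul_one]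
  refine mul_le_mul (Real.rpow_le_rpow_of_nonpos ht htR₁ (neg_nonpos.2 hμ))
    (Real.exp_le_exp.2 ?_) (Real.exp_pos _).le (Real.rpow_nonneg ht.le _)
  exact mul_le_mul_of_nonpos_left hprofile (neg_nonpos.2 hθ)

lemma hasDerivAt_radialCutoff (ht : 0 < t) :
    HasDerivAt (radialCutoff μ θ R) (-(θ * t ^ (-μ) * radialCutoff μ θ R t +
      Real.exp (-θ * growthProfile μ t) * deriv Real.smoothTransition (R + 1 - t))) t := by
  have hχ : HasDerivAt Real.smoothTransition (deriv Real.smoothTransition (R + 1 - t))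
      (R + 1 - t) :=
    (Real.smoothTransition.contDiff (n := 1)).contDiffAt.differentiableAt one_ne_zero |>.hasDerivAt
  refine (((hasDerivAt_growthProfile ht).const_mul (-θ)).exp.mul
    (hχ.comp_const_sub (R + 1) t)).congr_deriv ?_
  rw [radialCutoff]
  ring

lemma exp_mul_abs_deriv_smoothTransition_le (hl : LipschitzWith l Real.smoothTransition)
    (hθ : 0 ≤ θ) (hR : 0 < R) :
    Real.exp (-θ * growthProfile μ t) * |deriv Real.smoothTransition (R + 1 - t)| ≤
      l * Real.exp (-θ * growthProfile μ R) * (Iio (R + 1)).indicator 1 t := by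
  rcases le_or_gt (R + 1) t with ht | ht
  · rw [deriv_smoothTransition_of_nonpos (sub_nonpos.2 ht), abs_zero, mul_zero,
      indicator_of_notMem (notMem_Iio.2 ht), mul_zero]
  rw [indicator_of_mem (mem_Iio.2 ht), Pi.one_apply, mul_one]
  rcases le_or_gt t R with htR | htR
  · rw [deriv_smoothTransition_of_one_le (by linarith), abs_zero, mul_zero]
    positivity
  · have hprofile := monotoneOn_growthProfile (μ := μ) hR (hR.trans htR) htR.le
    rw [mul_comm]
    exact mul_le_mul (norm_deriv_le_of_lipschitz hl)
      (Real.exp_le_exp.2 (mul_le_mul_of_nonpos_left hprofile (neg_nonpos.2 hθ)))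
      (Real.exp_pos _).le l.2

lemma abs_deriv_radialCutoff_le (hl : LipschitzWith l Real.smoothTransition)
    (hθ : 0 ≤ θ) (hR : 0 < R) (ht : 0 < t) :
    |deriv (radialCutoff μ θ R) t| ≤ θ * t ^ (-μ) * radialCutoff μ θ R t +
      l * Real.exp (-θ * growthProfile μ R) * (Iio (R + 1)).indicator 1 t := by
  rw [(hasDerivAt_radialCutoff ht).deriv, abs_neg]
  refine (abs_add_le _ _).trans (add_le_add (le_of_eq (abs_of_nonneg ?_)) ?_)
  · exact mul_nonneg (mul_nonneg hθ (Real.rpow_nonneg ht.le _)) radialCutoff_nonneg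
  · rw [abs_mul, Real.abs_exp]
    exact exp_mul_abs_deriv_smoothTransition_le hl hθ hR

end RadialCutoff

lemma exists_one_lt_mul_mul_lt {x y : ℝ} (h : x < y) : ∃ η, 1 < η ∧ x * η * η < y := by
  have hcont : ContinuousWithinAt (fun η => x * η * η) (Ioi 1) 1 := by fun_prop
  have hev : ∀ᶠ η in 𝓝[>] (1 : ℝ), x * η * η < y :=
    hcont.eventually_lt_const (by simpa only [mul_one])
  obtain ⟨η, hlt, hη⟩ := (hev.and self_mem_nhdsWithin).exists
  exact ⟨η, hη, hlt⟩

namespace WeakOneCoercive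

section ConditionB

variable {M : Type*} [MetricSpace M] {o : M} {μ β β' : ℝ} {b : M → ℝ}

lemma ConditionB.exists_forall_lt (hbB : ConditionB o μ β b) (hμ : μ ≠ 0) (hβ : β' < β) :
    ∃ R, ∀ x, R ≤ dist o x → β' < dist o x ^ μ * b x := by
  rw [ConditionB, if_neg hμ] at hbB
  have hev := eventually_lt_of_lt_liminf ((EReal.coe_lt_coe_iff.2 hβ).trans_le hbB)
  simp only [EReal.coe_lt_coe_iff, eventually_comap] at hev
  obtain ⟨R, hR⟩ := eventually_atTop.1 hev
  exact ⟨R, fun x hx => hR _ hx x rfl⟩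

lemma ConditionB.exists_mul_rpow_neg_le [ProperSpace M] (hbB : ConditionB o μ β b) (hμ : 0 ≤ μ)
    (hβ : β' < β) (hb : Continuous b) (hbpos : ∀ x, 0 < b x) :
    ∃ S, 1 ≤ S ∧ ∀ x t, dist o x + S ≤ t → β' * t ^ (-μ) ≤ b x := by
  rcases hμ.eq_or_lt with rfl | hμ
  · rw [ConditionB, if_pos rfl] at hbB
    refine ⟨1, le_rfl, fun x t _ => ?_⟩
    rw [neg_zero, Real.rpow_zero, mul_one]
    exact hβ.le.trans (hbB x)
  obtain ⟨R, hR⟩ := hbB.exists_forall_lt hμ.ne' hβ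
  obtain ⟨y, -, hy⟩ := (isCompact_closedBall o (max R 0)).exists_isMinOn
    ⟨o, Metric.mem_closedBall_self (le_max_right _ _)⟩ hb.continuousOn
  obtain ⟨S, hS⟩ := eventually_atTop.1
    ((tendsto_rpow_atTop hμ).eventually_ge_atTop (β' / b y))
  refine ⟨max 1 S, le_max_left _ _, fun x t ht => ?_⟩
  have hxt : dist o x ≤ t := by linarith [le_max_left 1 S]
  have hSt : S ≤ t := by linarith [le_max_right 1 S, dist_nonneg (x := o) (y := x)]
  have htpos : 0 < t := by linarith [le_max_left 1 S, dist_nonneg (x := o) (y := x)]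
  rw [Real.rpow_neg htpos.le, ← div_eq_mul_inv, div_le_iff₀ (Real.rpow_pos_of_pos htpos _),
    mul_comm]
  rcases le_or_gt (dist o x) (max R 0) with hx | hx
  · have hyx : b y ≤ b x := hy (Metric.mem_closedBall'.2 hx)
    exact ((div_le_iff₀ (hbpos y)).1 (hS t hSt)).trans
      (mul_le_mul_of_nonneg_left hyx (Real.rpow_nonneg htpos.le _))
  · exact (hR x ((le_max_left _ _).trans hx.le)).le.trans
      (mul_le_mul_of_nonneg_right (Real.rpow_le_rpow dist_nonneg hxt hμ.le) (hbpos x).le)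

end ConditionB

section Growth

variable {m : ℕ} {M : Type*} [MetricSpace M] [ChartedSpace (Euc m) M]
  [IsManifold 𝓘(ℝ, Euc m) ∞ M] [RiemannianBundle (fun x : M => TangentSpace 𝓘(ℝ, Euc m) x)]
  [SigmaCompactSpace M] [MeasurableSpace M]
  {o : M} {μ θ c : ℝ} {w : M → ℝ} {Ω : Set M}

lemma weightedGrowth_eq_liminf_log_div_growthProfile :
    weightedGrowth m o μ w Ω = liminf (fun R : ℝ =>
      ENNReal.log (∫⁻ x in Metric.ball o R ∩ Ω, ENNReal.ofReal (w x) ∂(riemVolume m M)) /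
        (growthProfile μ R : EReal)) atTop := by
  rcases eq_or_ne μ 1 with rfl | hμ
  · rw [weightedGrowth, if_pos rfl, growthProfile_one]
  · rw [weightedGrowth, if_neg hμ, growthProfile_of_ne_one hμ]
    congr 1 with R
    rw [EReal.div_eq_inv_mul, EReal.div_eq_inv_mul, ← EReal.coe_inv, ← EReal.coe_inv, inv_div,
      div_eq_inv_mul, EReal.coe_mul, mul_assoc]

lemma le_weightedGrowth (hμ : μ ≤ 1) (hc : 0 < c)
    (h : ∀ᶠ R in atTop, ENNReal.ofReal (c * Real.exp (θ * growthProfile μ R)) ≤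
      ∫⁻ x in Metric.ball o R ∩ Ω, ENNReal.ofReal (w x) ∂(riemVolume m M)) :
    (θ : EReal) ≤ weightedGrowth m o μ w Ω := by
  have hprofile := tendsto_growthProfile_atTop hμ
  have hlim : Tendsto (fun R => ((Real.log c / growthProfile μ R + θ : ℝ) : EReal)) atTop
      (𝓝 (θ : EReal)) := by
    refine (continuous_coe_real_ereal.tendsto θ).comp ?_
    simpa only [zero_add] using (hprofile.const_div_atTop (Real.log c)).add_const θ
  rw [weightedGrowth_eq_liminf_log_div_growthProfile, ← hlim.liminf_eq]
  refine liminf_le_liminf ?_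
  filter_upwards [h, hprofile.eventually_gt_atTop 0] with R hR hpos
  have hexp : ENNReal.log (ENNReal.ofReal (c * Real.exp (θ * growthProfile μ R))) =
      ((Real.log c + θ * growthProfile μ R : ℝ) : EReal) := by
    rw [ENNReal.log_ofReal_of_pos (mul_pos hc (Real.exp_pos _)),
      Real.log_mul hc.ne' (Real.exp_pos _).ne', Real.log_exp]
  refine le_trans (le_of_eq ?_) (EReal.div_le_div_right_of_nonneg (EReal.coe_nonneg.2 hpos.le)
    (hexp.symm.le.trans (ENNReal.log_monotone hR)))
  rw [← EReal.coe_div, add_div, mul_div_cancel_right₀ _ hpos.ne']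

end Growth

section RadialTestFunction

variable {M : Type*} [MetricSpace M] {b τ : M → ℝ} {μ θ β β' a K : ℝ}

lemma tsupport_radialCutoff_comp_subset {o : M} (hτ : ∀ x, dist o x + 1 ≤ τ x) (R : ℝ) :
    tsupport (fun x => radialCutoff μ θ R (τ x)) ⊆ Metric.closedBall o R := by
  refine closure_minimal (fun x hx => ?_) Metric.isClosed_closedBall
  by_contra hxR
  refine hx (radialCutoff_eq_zero ?_)
  linarith [hτ x, not_le.1 (mt Metric.mem_closedBall'.2 hxR)]

variable {m : ℕ} [ChartedSpace (Euc m) M]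

lemma contMDiff_radialCutoff_comp {R : ℝ} (hτ : ContMDiff 𝓘(ℝ, Euc m) 𝓘(ℝ, ℝ) 1 τ)
    (hpos : ∀ x, 0 < τ x) :
    ContMDiff 𝓘(ℝ, Euc m) 𝓘(ℝ, ℝ) 1 fun x => radialCutoff μ θ R (τ x) := fun x =>
  (contDiffAt_radialCutoff (hpos x)).contMDiffAt.comp x (hτ x)

variable [RiemannianBundle (fun x : M => TangentSpace 𝓘(ℝ, Euc m) x)]

lemma mul_radialCutoff_sub_le {x : M} {R η : ℝ} {l : NNReal}
    (hl : LipschitzWith l Real.smoothTransition) (hθ : 0 ≤ θ) (ha : 0 ≤ a) (hK : 0 ≤ K)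
    (hR : 0 < R) (hτ : MDifferentiableAt 𝓘(ℝ, Euc m) 𝓘(ℝ, ℝ) τ x) (hpos : 0 < τ x)
    (hη : ‖riemGradient (m := m) τ x‖ ≤ η) (hb : β' * τ x ^ (-μ) ≤ b x) :
    (a * β' - K * θ * η) * (τ x ^ (-μ) * radialCutoff μ θ R (τ x)) -
        K * η * l * Real.exp (-θ * growthProfile μ R) * (Iio (R + 1)).indicator 1 (τ x) ≤
      a * b x * radialCutoff μ θ R (τ x) -
        K * ‖riemGradient (m := m) (fun y => radialCutoff μ θ R (τ y)) x‖ := by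
  have hgrad : ‖riemGradient (m := m) (fun y => radialCutoff μ θ R (τ y)) x‖ ≤
      (θ * τ x ^ (-μ) * radialCutoff μ θ R (τ x) +
        l * Real.exp (-θ * growthProfile μ R) * (Iio (R + 1)).indicator 1 (τ x)) * η := by
    rw [riemGradient_comp hτ ((contDiffAt_radialCutoff hpos).differentiableAt
      one_ne_zero).hasDerivAt, norm_smul]
    exact mul_le_mul (abs_deriv_radialCutoff_le hl hθ hR hpos) hη (norm_nonneg _)
      ((abs_nonneg _).trans (abs_deriv_radialCutoff_le hl hθ hR hpos))
  have hKgrad := mul_le_mul_of_nonneg_left hgrad hK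
  have hsource := mul_le_mul_of_nonneg_right (mul_le_mul_of_nonneg_left hb ha)
    (radialCutoff_nonneg (μ := μ) (θ := θ) (R := R) (t := τ x))
  linarith

variable [IsManifold 𝓘(ℝ, Euc m) ∞ M]
  [IsContMDiffRiemannianBundle 𝓘(ℝ, Euc m) ∞ (Euc m)
      (fun x : M => TangentSpace 𝓘(ℝ, Euc m) x)]
  [IsRiemannianManifold 𝓘(ℝ, Euc m) M] [SigmaCompactSpace M]

lemma ConditionB.exists_smooth_distance [ProperSpace M] {o : M} {η : ℝ}
    (hbB : ConditionB o μ β b) (hμ : 0 ≤ μ) (hβ : β' < β) (hb : Continuous b)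
    (hbpos : ∀ x, 0 < b x) (hη : 1 < η) :
    ∃ τ : M → ℝ, ContMDiff 𝓘(ℝ, Euc m) 𝓘(ℝ, ℝ) 1 τ ∧ ∀ x, dist o x + 1 ≤ τ x ∧
      ‖riemGradient (m := m) τ x‖ ≤ η ∧ β' * τ x ^ (-μ) ≤ b x := by
  obtain ⟨S, hS, hSb⟩ := hbB.exists_mul_rpow_neg_le hμ hβ hb hbpos
  obtain ⟨ρ, hρ, hρr⟩ := exists_smooth_approx_of_lipschitz (m := m) (LipschitzWith.dist_right o) hη
  have hlow : ∀ x, dist o x + S ≤ ρ x + (1 + S) := fun x => by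
    linarith [(abs_le.1 (hρr x).1).1]
  refine ⟨fun x => ρ x + (1 + S), (hρ.of_le (by simp)).add contMDiff_const, fun x =>
    ⟨by linarith [hlow x], ?_, hSb x _ (hlow x)⟩⟩
  rw [riemGradient_add ((hρ x).mdifferentiableAt (by simp)) mdifferentiableAt_const,
    riemGradient_const, add_zero]
  exact (hρr x).2

lemma ConditionB.exists_mul_radialCutoff_sub_le [ProperSpace M] {o : M}
    (hbB : ConditionB o μ β b) (hμ : 0 ≤ μ) (hβ : 0 < β) (hb : Continuous b)
    (hbpos : ∀ x, 0 < b x) (hθ : 0 ≤ θ) (ha : 0 < a) (hK : 0 < K) (hKθ : K * θ < a * β) :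
    ∃ (τ : M → ℝ) (κ C : ℝ), 0 < κ ∧ 0 < C ∧ ContMDiff 𝓘(ℝ, Euc m) 𝓘(ℝ, ℝ) 1 τ ∧
      (∀ x, dist o x + 1 ≤ τ x) ∧ ∀ R, 0 < R → ∀ x,
        κ * (τ x ^ (-μ) * radialCutoff μ θ R (τ x)) -
            C * Real.exp (-θ * growthProfile μ R) * (Metric.ball o R).indicator 1 x ≤
          a * b x * radialCutoff μ θ R (τ x) -
            K * ‖riemGradient (m := m) (fun y => radialCutoff μ θ R (τ y)) x‖ := by
  obtain ⟨η, hη, hKη⟩ := exists_one_lt_mul_mul_lt hKθ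
  have hη0 : 0 < η := one_pos.trans hη
  obtain ⟨τ, hτ, hτb⟩ := hbB.exists_smooth_distance (m := m) hμ (div_lt_self hβ hη) hb hbpos hη
  obtain ⟨l, hl⟩ := exists_lipschitzWith_smoothTransition
  have hκ : 0 < a * (β / η) - K * θ * η := by
    rwa [sub_pos, mul_div_assoc', lt_div_iff₀ hη0]
  refine ⟨τ, _, K * η * (l + 1 : NNReal), hκ, by positivity, hτ, fun x => (hτb x).1,
    fun R hR x => ?_⟩
  have hball : (Iio (R + 1)).indicator (1 : ℝ → ℝ) (τ x) ≤ (Metric.ball o R).indicator 1 x :=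
    indicator_apply_le' (fun hx => (indicator_of_mem (Metric.mem_ball'.2
      (by linarith [(hτb x).1, mem_Iio.1 hx])) (1 : M → ℝ)).ge)
      fun _ => indicator_nonneg (fun _ _ => zero_le_one) x
  have hx0 : 0 < τ x := by linarith [(hτb x).1, dist_nonneg (x := o) (y := x)]
  refine le_trans (sub_le_sub_left (mul_le_mul_of_nonneg_left hball (by positivity)) _)
    (mul_radialCutoff_sub_le (hl.weaken (le_add_of_nonneg_right zero_le_one)) hθ ha.le hK.le hR
      ((hτ x).mdifferentiableAt one_ne_zero) hx0 (hτb x).2.1 (hτb x).2.2)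

end RadialTestFunction

section WeightedIntegrals

variable {m : ℕ} {M : Type*} [MetricSpace M] [ChartedSpace (Euc m) M]
  [IsManifold 𝓘(ℝ, Euc m) ∞ M] [RiemannianBundle (fun x : M => TangentSpace 𝓘(ℝ, Euc m) x)]
  [SigmaCompactSpace M] [MeasurableSpace M]
  {Ω S : Set M} {w g : M → ℝ}

lemma IsWeight.ae_pos_of_subset (hw : IsWeight m Ω w) (hS : S ⊆ Ω) :
    ∀ᵐ x ∂(riemVolume m M).restrict S, 0 < w x :=
  ae_mono (Measure.restrict_mono hS le_rfl) hw.pos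

lemma IsWeight.aemeasurable_of_subset (hw : IsWeight m Ω w) (hS : S ⊆ Ω) :
    AEMeasurable w ((riemVolume m M).restrict S) :=
  hw.measurable.mono_measure (Measure.restrict_mono hS le_rfl)

lemma IsWeight.integrableOn_iff_lintegral_ne_top (hw : IsWeight m Ω w) (hS : S ⊆ Ω) :
    IntegrableOn w S (riemVolume m M) ↔
      ∫⁻ x in S, ENNReal.ofReal (w x) ∂(riemVolume m M) ≠ ⊤ :=
  (lintegral_ofReal_ne_top_iff_integrable (hw.aemeasurable_of_subset hS).aestronglyMeasurable
    ((hw.ae_pos_of_subset hS).mono fun _ => le_of_lt)).symm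

variable [IsContMDiffRiemannianBundle 𝓘(ℝ, Euc m) ∞ (Euc m)
    (fun x : M => TangentSpace 𝓘(ℝ, Euc m) x)] [BorelSpace M]

lemma IsWeight.lintegral_pos (hw : IsWeight m Ω w) (hSΩ : S ⊆ Ω) (hS : IsOpen S)
    (hne : S.Nonempty) : 0 < ∫⁻ x in S, ENNReal.ofReal (w x) ∂(riemVolume m M) := by
  refine pos_iff_ne_zero.2 fun hzero => hS.measure_ne_zero (riemVolume m M) hne ?_
  rw [lintegral_eq_zero_iff' (hw.aemeasurable_of_subset hSΩ).ennreal_ofReal] at hzero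
  rw [← Measure.restrict_eq_zero, ← ae_eq_bot, ← eventually_false_iff_eq_bot]
  filter_upwards [hw.ae_pos_of_subset hSΩ, hzero] with x hx hx0
  exact (ENNReal.ofReal_pos.2 hx).ne' hx0

lemma IsWeight.setIntegral_mul_pos (hw : IsWeight m Ω w) (hSΩ : S ⊆ Ω) (hS : IsOpen S)
    (hne : S.Nonempty) (hg : ∀ x ∈ S, 0 < g x)
    (hi : IntegrableOn (fun x => w x * g x) S (riemVolume m M)) :
    0 < ∫ x in S, w x * g x ∂(riemVolume m M) := by
  have hpos : ∀ᵐ x ∂(riemVolume m M).restrict S, 0 < w x * g x := by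
    filter_upwards [hw.ae_pos_of_subset hSΩ, ae_restrict_mem hS.measurableSet] with x hwx hx
    exact mul_pos hwx (hg x hx)
  refine (integral_pos_iff_support_of_nonneg_ae (hpos.mono fun _ => le_of_lt) hi).2
    (lt_of_lt_of_le ?_ (measure_mono_ae (s := univ) (hpos.mono fun _ hx _ => hx.ne')))
  rw [Measure.restrict_apply_univ]
  exact hS.measure_pos _ hne

end WeightedIntegrals

end WeakOneCoercive

lemma mul_setIntegral_le_mul_setIntegral {X : Type*} [MeasurableSpace X] {ν : Measure X}
    {Ω V B : Set X} {w Λ F : X → ℝ} {c d : ℝ} (hΩ : MeasurableSet Ω) (hV : MeasurableSet V)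
    (hB : MeasurableSet B) (hVΩ : V ⊆ Ω) (hBΩ : B ⊆ Ω) (hw : ∀ᵐ x ∂ν.restrict Ω, 0 ≤ w x)
    (hΛ0 : ∀ x, 0 ≤ Λ x) (hΛ1 : ∀ x, Λ x ≤ 1) (hd : 0 ≤ d)
    (hF : ∀ x ∈ Ω, V.indicator (fun _ => c) x - B.indicator (fun _ => d) x ≤ F x)
    (hwV : IntegrableOn (fun x => w x * Λ x) V ν) (hwB : IntegrableOn w B ν)
    (hi : IntegrableOn (fun x => w x * (Λ x * F x)) Ω ν)
    (hle : ∫ x in Ω, w x * (Λ x * F x) ∂ν ≤ 0) :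
    c * ∫ x in V, w x * Λ x ∂ν ≤ d * ∫ x in B, w x ∂ν := by
  have hiV : IntegrableOn (V.indicator fun x => c * (w x * Λ x)) Ω ν :=
    (IntegrableOn.integrable_indicator (hwV.const_mul c) hV).integrableOn
  have hiB : IntegrableOn (B.indicator fun x => d * w x) Ω ν :=
    (IntegrableOn.integrable_indicator (hwB.const_mul d) hB).integrableOn
  have hpointwise : ∀ᵐ x ∂ν.restrict Ω, V.indicator (fun x => c * (w x * Λ x)) x -
      B.indicator (fun x => d * w x) x ≤ w x * (Λ x * F x) := by
    filter_upwards [ae_restrict_mem hΩ, hw] with x hx hwx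
    have hwΛF := mul_le_mul_of_nonneg_left (hF x hx) (mul_nonneg hwx (hΛ0 x))
    have hwΛ : d * (w x * Λ x) ≤ d * w x :=
      mul_le_mul_of_nonneg_left (mul_le_of_le_one_right hwx (hΛ1 x)) hd
    by_cases hxV : x ∈ V <;> by_cases hxB : x ∈ B <;>
      simp only [hxV, hxB, indicator_of_mem, indicator_of_notMem, not_false_eq_true] at hwΛF ⊢ <;>
      linarith
  have hsub := (integral_mono_ae (hiV.sub' hiB) hi hpointwise).trans hle
  rw [integral_sub hiV hiB, setIntegral_indicator hV, setIntegral_indicator hB,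
    inter_eq_right.2 hVΩ, inter_eq_right.2 hBΩ, integral_const_mul, integral_const_mul] at hsub
  exact sub_nonpos.1 hsub

lemma integrableOn_mul_smoothTransition {X : Type*} [TopologicalSpace X] [MeasurableSpace X]
    [BorelSpace X] {ν : Measure X} {V : Set X} {w z : X → ℝ} {γ : ℝ} (hV : MeasurableSet V)
    (hz : ContinuousOn z V) (hw : IntegrableOn w V ν) :
    IntegrableOn (fun x => w x * Real.smoothTransition (z x - γ)) V ν := by
  have hΛ : ContinuousOn (fun x => Real.smoothTransition (z x - γ)) V :=
    Real.smoothTransition.continuous.comp_continuousOn (hz.sub continuousOn_const)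
  refine Integrable.mul_bdd (c := 1) hw (hΛ.aemeasurable hV).aestronglyMeasurable
    (Eventually.of_forall fun x => ?_)
  rw [Real.norm_of_nonneg (Real.smoothTransition.nonneg _)]
  exact Real.smoothTransition.le_one _

namespace WeakOneCoercive

section GrowthOfWeightedVolume

variable {m : ℕ} {M : Type*} [MetricSpace M] [ChartedSpace (Euc m) M]
  [IsManifold 𝓘(ℝ, Euc m) ∞ M] [RiemannianBundle (fun x : M => TangentSpace 𝓘(ℝ, Euc m) x)]
  [SigmaCompactSpace M] [MeasurableSpace M]
  {o x₀ : M} {Ω V : Set M} {w b z τ : M → ℝ} {α β γ k μ θ κ C R R₀ R₁ : ℝ}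

lemma weightedGrowth_eq_top (hμ : μ ≤ 1)
    (h : ∫⁻ x in Metric.ball o R₀ ∩ Ω, ENNReal.ofReal (w x) ∂(riemVolume m M) = ⊤) :
    weightedGrowth m o μ w Ω = ⊤ := by
  refine EReal.eq_top_iff_forall_lt _ |>.2 fun θ => (EReal.coe_lt_coe_iff.2 (lt_add_one θ)).trans_le
    (le_weightedGrowth hμ one_pos ?_)
  filter_upwards [eventually_ge_atTop R₀] with R hR
  exact le_top.trans (h.symm.le.trans (lintegral_mono_set
    (inter_subset_inter_left _ (Metric.ball_subset_ball hR))))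

variable [BorelSpace M]

lemma EnergyInequality.mul_setIntegral_le [ProperSpace M]
    (henergy : EnergyInequality m Ω α γ k w b z) (hΩ : IsOpen Ω)
    (hw : IsWeight m Ω w) (hwR : ∀ R, IntegrableOn w (Metric.ball o R ∩ Ω) (riemVolume m M))
    (hμ : 0 ≤ μ) (hθ : 0 ≤ θ) (hτ : ContMDiff 𝓘(ℝ, Euc m) 𝓘(ℝ, ℝ) 1 τ)
    (hτo : ∀ x, dist o x + 1 ≤ τ x) (hκ : 0 ≤ κ) (hC : 0 ≤ C)
    (hτκ : ∀ x, κ * (τ x ^ (-μ) * radialCutoff μ θ R (τ x)) -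
        C * Real.exp (-θ * growthProfile μ R) * (Metric.ball o R).indicator 1 x ≤
      α * γ * b x * radialCutoff μ θ R (τ x) -
        2 * k * ‖riemGradient (m := m) (fun y => radialCutoff μ θ R (τ y)) x‖)
    (hV : MeasurableSet V) (hVΩ : V ⊆ Ω) (hVτ : ∀ x ∈ V, τ x ≤ R₁) (hR : R₁ ≤ R)
    (hwV : IntegrableOn (fun x => w x * Real.smoothTransition (z x - γ)) V (riemVolume m M)) :
    κ * (R₁ ^ (-μ) * Real.exp (-θ * growthProfile μ R₁)) *
        ∫ x in V, w x * Real.smoothTransition (z x - γ) ∂(riemVolume m M) ≤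
      C * Real.exp (-θ * growthProfile μ R) *
        ∫ x in Metric.ball o R ∩ Ω, w x ∂(riemVolume m M) := by
  have hτ0 : ∀ x, 0 < τ x := fun x => by linarith [hτo x, dist_nonneg (x := o) (y := x)]
  have hsupp := tsupport_radialCutoff_comp_subset (μ := μ) (θ := θ) hτo R
  obtain ⟨hi, hle⟩ := henergy _ (contMDiff_radialCutoff_comp (μ := μ) (θ := θ) hτ hτ0)
    (fun _ => radialCutoff_nonneg)
    ((isCompact_closedBall o R).of_isClosed_subset (isClosed_tsupport _) hsupp)
    ((hwR (R + 1)).mono_set (inter_subset_inter_left _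
      (hsupp.trans (Metric.closedBall_subset_ball (lt_add_one R)))))
  refine mul_setIntegral_le_mul_setIntegral hΩ.measurableSet hV
    (Metric.isOpen_ball.inter hΩ).measurableSet hVΩ inter_subset_right
    (hw.pos.mono fun _ => le_of_lt) (fun _ => Real.smoothTransition.nonneg _)
    (fun _ => Real.smoothTransition.le_one _) (by positivity)
    (fun x hx => (sub_le_sub ?_ (le_of_eq ?_)).trans (hτκ x)) hwV (hwR R) hi hle
  · have hprod : 0 ≤ κ * (τ x ^ (-μ) * radialCutoff μ θ R (τ x)) :=
      mul_nonneg hκ (mul_nonneg (Real.rpow_nonneg (hτ0 x).le _) radialCutoff_nonneg)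
    exact indicator_apply_le' (fun hxV => mul_le_mul_of_nonneg_left
      (rpow_neg_mul_exp_le_rpow_neg_mul_radialCutoff hμ hθ (hτ0 x) (hVτ x hxV) hR) hκ)
      fun _ => hprod
  · by_cases hxR : x ∈ Metric.ball o R <;> simp [hxR, hx]

variable [IsContMDiffRiemannianBundle 𝓘(ℝ, Euc m) ∞ (Euc m)
      (fun x : M => TangentSpace 𝓘(ℝ, Euc m) x)]

lemma IsWeight.weightedGrowth_nonneg (hw : IsWeight m Ω w) (o : M) (hμ : μ ≤ 1) (hΩ : IsOpen Ω)
    (hne : Ω.Nonempty) : 0 ≤ weightedGrowth m o μ w Ω := by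
  obtain ⟨x, hx⟩ := hne
  set R₀ := dist x o + 1
  set W := ∫⁻ x in Metric.ball o R₀ ∩ Ω, ENNReal.ofReal (w x) ∂(riemVolume m M)
  have hWpos : 0 < W := hw.lintegral_pos inter_subset_right (Metric.isOpen_ball.inter hΩ)
    ⟨x, Metric.mem_ball.2 (lt_add_one _), hx⟩
  by_cases hWtop : W = ⊤
  · exact (weightedGrowth_eq_top hμ hWtop).ge.trans' le_top
  refine le_weightedGrowth (θ := 0) hμ (ENNReal.toReal_pos hWpos.ne' hWtop) ?_
  filter_upwards [eventually_ge_atTop R₀] with R hR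
  rw [zero_mul, Real.exp_zero, mul_one, ENNReal.ofReal_toReal hWtop]
  exact lintegral_mono_set (inter_subset_inter_left _ (Metric.ball_subset_ball hR))

variable [IsRiemannianManifold 𝓘(ℝ, Euc m) M]

lemma EnergyInequality.exists_exp_growthProfile_le [ProperSpace M]
    (henergy : EnergyInequality m Ω α γ k w b z) (hΩ : IsOpen Ω)
    (hw : IsWeight m Ω w) (hwR : ∀ R, IntegrableOn w (Metric.ball o R ∩ Ω) (riemVolume m M))
    (hk : 0 < k) (hμ : 0 ≤ μ) (hβ : 0 < β) (hb : Continuous b) (hbpos : ∀ x, 0 < b x)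
    (hbB : ConditionB o μ β b) (hα : 0 < α) (hγ : 0 < γ) (hθ : 0 ≤ θ)
    (hθγ : 2 * k * θ < α * γ * β) (hz : ContinuousOn z Ω) (hx₀ : x₀ ∈ Ω) (hzx₀ : γ < z x₀) :
    ∃ c, 0 < c ∧ ∀ᶠ R in atTop, c * Real.exp (θ * growthProfile μ R) ≤
      ∫ x in Metric.ball o R ∩ Ω, w x ∂(riemVolume m M) := by
  obtain ⟨τ, κ, C, hκ, hC, hτ, hτo, hτκ⟩ :=
    hbB.exists_mul_radialCutoff_sub_le (m := m) hμ hβ hb hbpos hθ (mul_pos hα hγ)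
      (by positivity : 0 < 2 * k) hθγ
  have hR₁ : 0 < τ x₀ + 1 := by linarith [hτo x₀, dist_nonneg (x := o) (y := x₀)]
  set V := (Ω ∩ z ⁻¹' Ioi γ) ∩ τ ⁻¹' Iio (τ x₀ + 1)
  have hV : IsOpen V :=
    (hz.isOpen_inter_preimage hΩ isOpen_Ioi).inter (isOpen_Iio.preimage hτ.continuous)
  have hVΩ : V ⊆ Ω := fun x hx => hx.1.1
  have hVτ : ∀ x ∈ V, τ x < τ x₀ + 1 := fun x hx => hx.2
  have hwV : IntegrableOn (fun x => w x * Real.smoothTransition (z x - γ)) V (riemVolume m M) :=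
    integrableOn_mul_smoothTransition hV.measurableSet (hz.mono hVΩ)
      ((hwR (τ x₀ + 1)).mono_set fun x hx =>
        ⟨Metric.mem_ball'.2 (by linarith [hτo x, hVτ x hx]), hVΩ hx⟩)
  have hI := hw.setIntegral_mul_pos hVΩ hV ⟨x₀, ⟨hx₀, hzx₀⟩, lt_add_one (τ x₀)⟩
    (fun x hx => Real.smoothTransition.pos_of_pos (sub_pos.2 hx.1.2)) hwV
  set I := ∫ x in V, w x * Real.smoothTransition (z x - γ) ∂(riemVolume m M)
  set q := (τ x₀ + 1) ^ (-μ) * Real.exp (-θ * growthProfile μ (τ x₀ + 1))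
  have hq : 0 < q := mul_pos (Real.rpow_pos_of_pos hR₁ _) (Real.exp_pos _)
  refine ⟨κ * q * I / C, div_pos (mul_pos (mul_pos hκ hq) hI) hC, ?_⟩
  filter_upwards [eventually_ge_atTop (τ x₀ + 1)] with R hR
  have hle : κ * q * I ≤ C * Real.exp (-θ * growthProfile μ R) *
      ∫ x in Metric.ball o R ∩ Ω, w x ∂(riemVolume m M) :=
    henergy.mul_setIntegral_le hΩ hw hwR hμ hθ hτ hτo hκ.le hC.le (hτκ R (hR₁.trans_le hR))
      hV.measurableSet hVΩ (fun x hx => (hVτ x hx).le) hR hwV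
  rw [neg_mul, Real.exp_neg, mul_right_comm C, ← div_eq_mul_inv,
    le_div_iff₀ (Real.exp_pos _)] at hle
  rwa [div_mul_eq_mul_div, div_le_iff₀' hC]

theorem EnergyInequality.le_weightedGrowth [ProperSpace M]
    (henergy : EnergyInequality m Ω α γ k w b z) (hΩ : IsOpen Ω)
    (hw : IsWeight m Ω w) (hk : 0 < k) (hμ : μ ∈ Icc (0 : ℝ) 1) (hβ : 0 < β) (hb : Continuous b)
    (hbpos : ∀ x, 0 < b x) (hbB : ConditionB o μ β b) (hα : 0 < α) (hγ : 0 < γ)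
    (hz : ContinuousOn z Ω) (hx₀ : x₀ ∈ Ω) (hzx₀ : γ < z x₀) :
    ((α * γ * β / (2 * k) : ℝ) : EReal) ≤ weightedGrowth m o μ w Ω := by
  by_cases hfin : ∃ R, ∫⁻ x in Metric.ball o R ∩ Ω, ENNReal.ofReal (w x) ∂(riemVolume m M) = ⊤
  · rw [weightedGrowth_eq_top hμ.2 hfin.choose_spec]
    exact le_top
  have hwR : ∀ R, IntegrableOn w (Metric.ball o R ∩ Ω) (riemVolume m M) := fun R =>
    (hw.integrableOn_iff_lintegral_ne_top inter_subset_right).2 fun h => hfin ⟨R, h⟩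
  refine EReal.ge_of_forall_gt_iff_ge.1 fun θ hθ => ?_
  have hθγ : max θ 0 < α * γ * β / (2 * k) := max_lt (EReal.coe_lt_coe_iff.1 hθ) (by positivity)
  obtain ⟨c, hc, hgrowth⟩ := henergy.exists_exp_growthProfile_le hΩ hw hwR hk hμ.1 hβ hb hbpos hbB
    hα hγ (le_max_right θ 0) ((lt_div_iff₀' (by positivity)).1 hθγ) hz hx₀ hzx₀
  refine (EReal.coe_le_coe_iff.2 (le_max_left θ 0)).trans
    (WeakOneCoercive.le_weightedGrowth hμ.2 hc (hgrowth.mono fun R hR => ?_))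
  rw [← ofReal_integral_eq_lintegral_ofReal (hwR R)
    ((hw.ae_pos_of_subset inter_subset_right).mono fun _ => le_of_lt)]
  exact ENNReal.ofReal_le_ofReal hR

end GrowthOfWeightedVolume

end WeakOneCoercive

theorem stmt19_general {m : ℕ} {M : Type*} [MetricSpace M] [ChartedSpace (WeakOneCoercive.Euc m) M]
    [IsManifold 𝓘(ℝ, WeakOneCoercive.Euc m) ∞ M]
    [RiemannianBundle (fun x : M => TangentSpace 𝓘(ℝ, WeakOneCoercive.Euc m) x)]
    [IsContMDiffRiemannianBundle 𝓘(ℝ, WeakOneCoercive.Euc m) ∞ (WeakOneCoercive.Euc m)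
      (fun x : M => TangentSpace 𝓘(ℝ, WeakOneCoercive.Euc m) x)]
    [IsRiemannianManifold 𝓘(ℝ, WeakOneCoercive.Euc m) M]
    [SigmaCompactSpace M] [CompleteSpace M] [MeasurableSpace M] [BorelSpace M]
    (o : M) {Ω : Set M} (hΩ : IsOpen Ω)
    {A : ∀ x : M, ℝ → WeakOneCoercive.Tan (m := m) x → WeakOneCoercive.Tan (m := m) x}
    {k : ℝ} (hk : 0 < k) (hA : WeakOneCoercive.IsCaratheodory Ω A)
    (hAk : ∀ x ∈ Ω, ∀ s ξ, ‖A x s ξ‖ ≤ k)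
    (hAmono : ∀ x ∈ Ω, ∀ s t ξ η, s ≤ t → 0 ≤ inner ℝ (A x t ξ - A x s η) (ξ - η))
    {w : M → ℝ} (hw : WeakOneCoercive.IsWeight m Ω w)
    {μ β : ℝ} (hμ : μ ∈ Set.Icc (0 : ℝ) 1) (hβ : 0 < β)
    {b : M → ℝ} (hb : Continuous b) (hbpos : ∀ x, 0 < b x)
    (hbB : WeakOneCoercive.ConditionB o μ β b)
    {f : ℝ → ℝ} {α : ℝ} (hα : 0 < α) (hfα : ∀ s t : ℝ, t < s → α * (s - t) ≤ f s - f t)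
    {u v : M → ℝ} {Du Dv : ∀ x : M, WeakOneCoercive.Tan (m := m) x}
    (hu : WeakOneCoercive.HasWeakGradient Ω u Du) (huc : ContinuousOn u (closure Ω))
    (hv : WeakOneCoercive.HasWeakGradient Ω v Dv) (hvc : ContinuousOn v (closure Ω))
    (hLu : WeakOneCoercive.WeakGE Ω w A u Du (fun x => b x * f (u x)))
    (hLv : WeakOneCoercive.WeakLE Ω w A v Dv (fun x => b x * f (v x))) :
    ∀ x ∈ Ω, (u x : EReal) ≤ (v x : EReal) +
      max (((2 * k / (α * β) : ℝ) : EReal) * WeakOneCoercive.weightedGrowth m o μ w Ω)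
        (⨆ y ∈ frontier Ω, ((u y - v y : ℝ) : EReal)) := by
  intro x hx
  have : ProperSpace M := properSpace_of_isRiemannianManifold 𝓘(ℝ, WeakOneCoercive.Euc m)
  have hq : 0 < 2 * k / (α * β) := by positivity
  suffices h : ((u x - v x : ℝ) : EReal) ≤
      max (((2 * k / (α * β) : ℝ) : EReal) * WeakOneCoercive.weightedGrowth m o μ w Ω)
        (⨆ y ∈ frontier Ω, ((u y - v y : ℝ) : EReal)) by
    refine le_trans (le_of_eq ?_) (add_le_add_right h (v x : EReal))
    rw [← EReal.coe_add, add_sub_cancel]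
  by_contra! hlt
  obtain ⟨γ, hγ, hγx⟩ := EReal.lt_iff_exists_real_btwn.1 hlt
  obtain ⟨hcγ, hfrγ⟩ := max_lt_iff.1 hγ
  have hγ0 : 0 < γ := EReal.coe_pos.1 (hcγ.trans_le' (mul_nonneg (EReal.coe_nonneg.2 hq.le)
    (hw.weightedGrowth_nonneg o hμ.2 hΩ ⟨x, hx⟩)))
  have henergy : WeakOneCoercive.EnergyInequality m Ω α γ k w b fun y => u y - v y :=
    WeakOneCoercive.energyInequality_sub hΩ hA hAk hAmono hw hb (fun y => (hbpos y).le) hα.le hfα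
      hu huc hv hvc hLu hLv hγ0.le fun y hy =>
        EReal.coe_lt_coe_iff.1 ((le_iSup₂ (f := fun y (_ : y ∈ frontier Ω) =>
          ((u y - v y : ℝ) : EReal)) y hy).trans_lt hfrγ)
  have hgrowth := henergy.le_weightedGrowth hΩ hw hk hμ hβ hb hbpos hbB hα hγ0
    ((huc.sub hvc).mono subset_closure) hx (EReal.coe_lt_coe_iff.1 hγx)
  refine hcγ.not_ge (le_trans (le_of_eq ?_)
    (mul_le_mul_of_nonneg_left hgrowth (EReal.coe_nonneg.2 hq.le)))
  rw [← EReal.coe_mul, EReal.coe_eq_coe_iff]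
  field_simp

theorem stmt19 {m : ℕ} (hm : 2 ≤ m)
    {M : Type*} [MetricSpace M] [ChartedSpace (WeakOneCoercive.Euc m) M]
    [IsManifold 𝓘(ℝ, WeakOneCoercive.Euc m) ∞ M]
    [RiemannianBundle (fun x : M => TangentSpace 𝓘(ℝ, WeakOneCoercive.Euc m) x)]
    [IsContMDiffRiemannianBundle 𝓘(ℝ, WeakOneCoercive.Euc m) ∞ (WeakOneCoercive.Euc m)
      (fun x : M => TangentSpace 𝓘(ℝ, WeakOneCoercive.Euc m) x)]
    [IsRiemannianManifold 𝓘(ℝ, WeakOneCoercive.Euc m) M]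
    [ConnectedSpace M] [SigmaCompactSpace M] [CompleteSpace M]
    [MeasurableSpace M] [BorelSpace M]
    (o : M) (Ω : Set M) (hΩ : IsOpen Ω)
    (A : ∀ x : M, ℝ → WeakOneCoercive.Tan (m := m) x → WeakOneCoercive.Tan (m := m) x)
    (k : ℝ) (hk : 0 < k)
    (hA : WeakOneCoercive.IsCaratheodory Ω A)
    (hAk : WeakOneCoercive.IsWeaklyOneCoercive Ω A k)
    (hAmono : WeakOneCoercive.IsStrictlyMonotone Ω A)
    (w : M → ℝ) (hw : WeakOneCoercive.IsWeight m Ω w)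
    (μ β : ℝ) (hμ : μ ∈ Set.Icc (0 : ℝ) 1) (hβ : 0 < β)
    (b : M → ℝ) (hb : Continuous b) (hbpos : ∀ x, 0 < b x)
    (hbB : WeakOneCoercive.ConditionB o μ β b)
    (f : ℝ → ℝ) (hf : ContDiff ℝ 1 f)
    (α : ℝ) (hα : 0 < α) (hfα : ∀ s t : ℝ, t < s → α * (s - t) ≤ f s - f t)
    (u v : M → ℝ) (Du Dv : ∀ x : M, WeakOneCoercive.Tan (m := m) x)
    (hu : WeakOneCoercive.HasWeakGradient Ω u Du) (huc : ContinuousOn u (closure Ω))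
    (hv : WeakOneCoercive.HasWeakGradient Ω v Dv) (hvc : ContinuousOn v (closure Ω))
    (hLu : WeakOneCoercive.WeakGE Ω w A u Du (fun x => b x * f (u x)))
    (hLv : WeakOneCoercive.WeakLE Ω w A v Dv (fun x => b x * f (v x))) :
    ∀ x ∈ Ω, (u x : EReal) ≤ (v x : EReal) +
      max (((2 * k / (α * β) : ℝ) : EReal) * WeakOneCoercive.weightedGrowth m o μ w Ω)
        (⨆ y ∈ frontier Ω, ((u y - v y : ℝ) : EReal)) := by
  exact stmt19_general o hΩ hk hA hAk.norm_le hAmono.monotone hw hμ hβ hb hbpos hbB hα hfα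
    hu huc hv hvc hLu hLv
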